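/- arXiv:2405.07296 — 2 statements merged into one kernel-verified Lean document; each statement's English description precedes it below -/
import Mathlib

section
/- Let m ∈ ℕ with m ≥ 1, let p₁,…,p_m be minimal idempotent ultrafilters on ℕ, let A ∈ ⊗_{i=1}^m p_i, and let T ∈ 𝒫_f(ℙ). Then there exist functions α₁,…,α_m : 𝒫_f(ℕ^ℕ) → ℕ and H₁,…,H_m : 𝒫_f(ℕ^ℕ) → 𝒫_f(ℕ) such that (1) whenever G, K ∈ 𝒫_f(ℕ^ℕ) and G ⊊ K one has max H_j(G) < min H_j(K) for every j ∈ {1,…,m}, and (2) whenever n ≥ m, G₁ ⊊ G₂ ⊊ ⋯ ⊊ G_n in 𝒫_f(ℕ^ℕ), f_i ∈ G_i for each i ∈ {1,…,n}, β₁ < β₂ < ⋯ < β_m are nonempty subsets of {1,…,n}, and P₁,…,P_m ∈ T, the tuple (Σ_{i∈β₁}α₁(G_i) + P₁(Σ_{i∈β₁}Σ_{t∈H₁(G_i)}f_i(t)), …, Σ_{i∈β_m}α_m(G_i) + P_m(Σ_{i∈β_m}Σ_{t∈H_m(G_i)}f_i(t))) belongs to A. -/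
namespace MultiCST

/-- The sum `p + q` of ultrafilters on ℕ: `A ∈ p + q` iff `{x : {y : x+y ∈ A} ∈ q} ∈ p`. -/
def uAdd (p q : Ultrafilter ℕ) : Ultrafilter ℕ :=
  p.bind fun x => q.map fun y => x + y

/-- `A ⊆ ℕ` is a J-set. -/
def IsJSet (A : Set ℕ) : Prop :=
  ∀ F : Finset (ℕ → ℕ), F.Nonempty →
    ∃ (a : ℕ) (β : Finset ℕ), β.Nonempty ∧ ∀ f ∈ F, a + ∑ t ∈ β, f t ∈ A

/-- `p ∈ 𝒥`: every member of `p` is a J-set. -/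
def MemJ (p : Ultrafilter ℕ) : Prop := ∀ A : Set ℕ, A ∈ p → IsJSet A

/-- `p` is an idempotent ultrafilter. -/
def IdempotentUF (p : Ultrafilter ℕ) : Prop := uAdd p p = p

/-- `p` is a minimal idempotent ultrafilter. -/
def IsMinimalIdempotent (p : Ultrafilter ℕ) : Prop :=
  IdempotentUF p ∧
    ∀ q : Ultrafilter ℕ, IdempotentUF q → uAdd q p = q → uAdd p q = q → q = p

/-- Tensor product `⊗_{i=1}^m p_i` of ultrafilters on ℕ, as an ultrafilter on `Fin m → ℕ`. -/
def tensor : ∀ m : ℕ, (Fin m → Ultrafilter ℕ) → Ultrafilter (Fin m → ℕ)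
  | 0, _ => pure fun i => i.elim0
  | m + 1, p =>
      (p 0).bind fun x => (tensor m fun i => p i.succ).map fun v => Fin.cons x v

/-- `f : ℕ → ℕ` is (given by) a polynomial with coefficients in ℕ and zero constant term. -/
def IsPolyZeroConst (f : ℕ → ℕ) : Prop :=
  ∃ P : Polynomial ℕ, P.coeff 0 = 0 ∧ ∀ x, f x = P.eval x

/-- The linear combination `a₁·p₁ + a₂·p₂ + ⋯ + a_m·p_m` of ultrafilters on ℕ. -/
def linComb : ∀ m : ℕ, (Fin m → ℕ) → (Fin m → Ultrafilter ℕ) → Ultrafilter ℕ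
  | 0, _, _ => pure 0
  | m + 1, a, p =>
      uAdd ((p 0).map fun x => a 0 * x)
        (linComb m (fun i => a i.succ) fun i => p i.succ)

section poly
variable {V : Type*} [AddCommGroup V]

/-- Polynomial maps `V → ℤ` of degree at most `k` vanishing at `0`. -/
def IsP : ℕ → (V → ℤ) → Prop
  | 0, Q => ∀ v, Q v = 0
  | k + 1, Q => ∀ u, IsP k (fun v => Q (v + u) - Q v - Q u)

lemma isP_zero (k : ℕ) : IsP k (fun _ : V => (0 : ℤ)) := by
  induction k with
  | zero => intro v; rfl
  | succ k ih => intro u; simpa using ih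

lemma IsP.add {k : ℕ} : ∀ {Q R : V → ℤ}, IsP k Q → IsP k R → IsP k (fun v => Q v + R v) := by
  induction k with
  | zero => intro Q R h h' v; simp [h v, h' v]
  | succ k ih =>
    intro Q R h h' u
    have := ih (h u) (h' u)
    convert this using 2
    ring

lemma IsP.neg {k : ℕ} : ∀ {Q : V → ℤ}, IsP k Q → IsP k (fun v => - Q v) := by
  induction k with
  | zero => intro Q h v; simp [h v]
  | succ k ih =>
    intro Q h u
    have := ih (h u)
    convert this using 2
    ring

lemma IsP.sub {k : ℕ} {Q R : V → ℤ} (h : IsP k Q) (h' : IsP k R) :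
    IsP k (fun v => Q v - R v) := by
  simpa [sub_eq_add_neg] using h.add h'.neg

lemma IsP.succ {k : ℕ} : ∀ {Q : V → ℤ}, IsP k Q → IsP (k + 1) Q := by
  induction k with
  | zero => intro Q h u v; simp [h v, h u, h (v + u)]
  | succ k ih => intro Q h u; exact ih (h u)

lemma IsP.mono {k l : ℕ} (hkl : k ≤ l) {Q : V → ℤ} (h : IsP k Q) : IsP l Q := by
  induction hkl with
  | refl => exact h
  | step _ ih => exact ih.succ

lemma IsP.map_zero {k : ℕ} : ∀ {Q : V → ℤ}, IsP k Q → Q 0 = 0 := by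
  induction k with
  | zero => intro Q h; exact h 0
  | succ k ih => intro Q h; simpa using ih (h 0)

lemma isP_eval {ι : Type*} (f : ι) (k : ℕ) : ∀ P : Polynomial ℤ, P.coeff 0 = 0 → P.natDegree ≤ k →
    IsP k (fun v : ι → ℤ => P.eval (v f)) := by
  induction k with
  | zero =>
    intro P h0 hd v
    rw [Polynomial.eq_C_of_natDegree_le_zero hd, h0]; simp
  | succ k ih =>
    intro P h0 hd u
    have key := ih (Polynomial.taylor (u f) P - P - Polynomial.C (P.eval (u f))) ?_ ?_
    · convert key using 2 with v
      simp [Polynomial.taylor_eval]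
    · simp [Polynomial.taylor_coeff_zero, h0]
    · rw [Polynomial.natDegree_sub_C]
      by_cases hd0 : P.natDegree = 0
      · have hP : P = 0 := by
          rw [Polynomial.eq_C_of_natDegree_eq_zero hd0, h0]; simp
        simp [hP]
      have := Polynomial.degree_sub_lt_left (p := Polynomial.taylor (u f) P) (q := P)
        (by simp) (by intro h; simp at h; simp [h] at hd0) (by simp)
      by_cases hz : Polynomial.taylor (u f) P - P = 0
      · simp [hz]
      have h2 := Polynomial.natDegree_lt_natDegree hz this
      rw [Polynomial.natDegree_taylor] at h2
      omega
end poly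

lemma focus {V : Type*} [AddCommGroup V] (BB : Set (Set ℤ))
    (hinter : ∀ C ∈ BB, ∀ D ∈ BB, C ∩ D ∈ BB)
    (hshift : ∀ C ∈ BB, ∀ n : ℤ, {m | m + n ∈ C} ∈ BB)
    (hsynd : ∀ C ∈ BB, C.Nonempty → ∃ E : Finset ℤ, ∀ n, ∃ e ∈ E, n + e ∈ C)
    (x : ℕ → V) (Φ : Finset (V → ℤ)) (g : V → ℤ) (hQ0 : ∀ Q ∈ Φ, Q 0 = 0)
    (IH : ∀ W : Finset V, ∀ C ∈ BB, C.Nonempty → ∀ N : ℕ, ∃ H : Finset ℕ, H.Nonempty ∧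
      (∀ t ∈ H, N ≤ t) ∧ ∃ b ∈ C, ∀ Q ∈ Φ, ∀ w ∈ W,
        b + (Q (∑ t ∈ H, x t + w) - Q w - g (∑ t ∈ H, x t)) ∈ C)
    (B : Set ℤ) (hB : B ∈ BB) (hBn : B.Nonempty) (N : ℕ) :
    ∃ H : Finset ℕ, H.Nonempty ∧ (∀ t ∈ H, N ≤ t) ∧ ∃ b ∈ B, ∀ Q ∈ Φ,
      b + Q (∑ t ∈ H, x t) ∈ B := by
  classical
  have hfin : ∀ C ∈ BB, ∀ S : Finset ℤ, {b | b ∈ C ∧ ∀ r ∈ S, b + r ∈ C} ∈ BB := by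
    intro C hC S
    induction S using Finset.induction_on with
    | empty => simpa using hC
    | insert a S _ ih =>
      have := hinter _ ih _ (hshift C hC a)
      convert this using 1
      ext b
      simp only [Finset.mem_insert, Set.mem_ofPred_eq, Set.mem_inter_iff]
      constructor
      · rintro ⟨h1, h2⟩
        exact ⟨⟨h1, fun r hr => h2 r (Or.inr hr)⟩, h2 a (Or.inl rfl)⟩
      · rintro ⟨⟨h1, h2⟩, h3⟩
        refine ⟨h1, ?_⟩
        rintro r (rfl | hr)
        · exact h3
        · exact h2 r hr
  by_contra hno
  push Not at hno
  obtain ⟨E, hE⟩ := hsynd B hB hBn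
  have claim : ∀ s : ℕ, ∃ C ∈ BB, C.Nonempty ∧ ∃ eC ∈ E, (∀ y ∈ C, y + eC ∈ B) ∧
      ∃ M : ℕ, N ≤ M ∧ ∃ K : Finset ℤ, K ⊆ E ∧ K.card = s ∧ ∃ Hs : ℤ → Finset ℕ, ∀ e ∈ K,
        (Hs e).Nonempty ∧ (∀ t ∈ Hs e, N ≤ t ∧ t < M) ∧
        ∀ y ∈ C, ∀ Q ∈ Φ, y + Q (∑ t ∈ Hs e, x t) + e ∈ B := by
    intro s
    induction s with
    | zero =>
      obtain ⟨b, hb⟩ := hBn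
      obtain ⟨e, he, hbe⟩ := hE b
      refine ⟨{m | m + e ∈ B}, hshift B hB e, ⟨b, hbe⟩, e, he, fun y hy => hy, N, le_rfl, ∅,
        by simp, by simp, fun _ => ∅, by simp⟩
    | succ s ih =>
      obtain ⟨C, hC, hCn, eC, heC, hCB, M, hNM, K, hKE, hKs, Hs, hHs⟩ := ih
      have heK : eC ∉ K := by
        intro hmem
        obtain ⟨y, hy⟩ := hCn
        obtain ⟨h1, h2, h3⟩ := hHs eC hmem
        obtain ⟨Q, hQ, hQB⟩ := hno (Hs eC) h1 (fun t ht => (h2 t ht).1) (y + eC) (hCB y hy)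
        apply hQB
        have := h3 y hy Q hQ
        rwa [add_right_comm] at this
      obtain ⟨H, hHn, hHM, b, hb, hbR⟩ :=
        IH (insert 0 (K.image fun e => ∑ t ∈ Hs e, x t)) C hC hCn M
      set W : Finset V := insert 0 (K.image fun e => ∑ t ∈ Hs e, x t) with hW
      set v := ∑ t ∈ H, x t with hv
      let S : Finset ℤ := (Φ ×ˢ W).image fun q => q.1 (v + q.2) - q.1 q.2 - g v
      have hD := hshift _ (hfin C hC S) (g v)
      obtain ⟨e', he', hbe'⟩ := hE (b - g v)
      have hC2 := hinter _ hD _ (hshift B hB e')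
      refine ⟨_, hC2, ⟨b - g v, ?_, hbe'⟩, e', he', fun y hy => hy.2, M + (H.sup id + 1), by omega,
        insert eC K, ?_, ?_, fun e => if e = eC then H else H ∪ Hs e, ?_⟩
      · refine ⟨by simpa using hb, ?_⟩
        intro r hr
        simp only [S, Finset.mem_image, Finset.mem_product, Prod.exists] at hr
        obtain ⟨Q, w, ⟨hQ, hw⟩, rfl⟩ := hr
        simpa using hbR Q hQ w hw
      · intro e he
        rcases Finset.mem_insert.1 he with rfl | he
        · exact heC
        · exact hKE he
      · rw [Finset.card_insert_of_notMem heK, hKs]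
      · have hR : ∀ y, (y + g v ∈ C ∧ ∀ r ∈ S, y + g v + r ∈ C) → ∀ Q ∈ Φ, ∀ w ∈ W,
            y + (Q (v + w) - Q w) ∈ C := by
          intro y hy Q hQ w hw
          have := hy.2 _ (Finset.mem_image.2 ⟨(Q, w), Finset.mem_product.2 ⟨hQ, hw⟩, rfl⟩)
          convert this using 1
          ring
        have hHb : ∀ t ∈ H, t < M + (H.sup id + 1) := by
          intro t ht
          have : id t ≤ H.sup id := Finset.le_sup ht
          simp only [id] at this
          omega
        intro e he
        by_cases hee : e = eC
        · subst hee
          simp only [if_true]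
          refine ⟨hHn, fun t ht => ⟨hNM.trans (hHM t ht), hHb t ht⟩, ?_⟩
          intro y hy Q hQ
          apply hCB
          have := hR y hy.1 Q hQ 0 (by simp [hW])
          simpa [hQ0 Q hQ] using this
        · have heK' : e ∈ K := (Finset.mem_insert.1 he).resolve_left hee
          obtain ⟨h1, h2, h3⟩ := hHs e heK'
          simp only [hee, if_false]
          refine ⟨hHn.mono Finset.subset_union_left, ?_, ?_⟩
          · intro t ht
            rcases Finset.mem_union.1 ht with ht | ht
            · exact ⟨hNM.trans (hHM t ht), hHb t ht⟩
            · have := h2 t ht; omega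
          · intro y hy Q hQ
            have hdis : Disjoint H (Hs e) := by
              rw [Finset.disjoint_left]
              intro t ht ht'
              have := hHM t ht
              have := (h2 t ht').2
              omega
            rw [Finset.sum_union hdis]
            have := h3 _ (hR y hy.1 Q hQ (∑ t ∈ Hs e, x t)
              (Finset.mem_insert_of_mem (Finset.mem_image_of_mem _ heK'))) Q hQ
            convert this using 1
            ring
  obtain ⟨C, _, _, _, _, _, _, _, K, hKE, hKs, _⟩ := claim (E.card + 1)
  have := Finset.card_le_card hKE
  omega

lemma polyRec {V : Type*} [AddCommGroup V] (BB : Set (Set ℤ))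
    (hinter : ∀ C ∈ BB, ∀ D ∈ BB, C ∩ D ∈ BB)
    (hshift : ∀ C ∈ BB, ∀ n : ℤ, {m | m + n ∈ C} ∈ BB)
    (hsynd : ∀ C ∈ BB, C.Nonempty → ∃ E : Finset ℤ, ∀ n, ∃ e ∈ E, n + e ∈ C)
    (x : ℕ → V) (M : Multiset ℕ) : ∀ (GG : Multiset ((V → ℤ) × ℕ)), GG.map Prod.snd = M →
    (∀ c ∈ GG, IsP (c.2 + 1) c.1) → ∀ Φ : Finset (V → ℤ),
    (∀ Q ∈ Φ, ∃ c ∈ GG, IsP c.2 (fun v => Q v - c.1 v)) →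
    ∀ B ∈ BB, B.Nonempty → ∀ N : ℕ,
    ∃ H : Finset ℕ, H.Nonempty ∧ (∀ t ∈ H, N ≤ t) ∧ ∃ b ∈ B, ∀ Q ∈ Φ,
      b + Q (∑ t ∈ H, x t) ∈ B := by
  classical
  induction M using (Multiset.wellFounded_isDershowitzMannaLT (α := ℕ)).induction with
  | _ M IH =>
  intro GG hGM hGG Φ hΦ B hB hBn N
  by_cases hG0 : GG = 0
  · obtain ⟨b, hb⟩ := hBn
    refine ⟨{N}, by simp, by simp, b, hb, ?_⟩
    intro Q hQ
    obtain ⟨c, hc, _⟩ := hΦ Q hQ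
    simp [hG0] at hc
  obtain ⟨c1, hc1, hmin⟩ : ∃ c ∈ GG, ∀ c' ∈ GG, c.2 ≤ c'.2 := by
    have hne : GG.toFinset.Nonempty := by
      obtain ⟨a, ha⟩ := Multiset.exists_mem_of_ne_zero hG0
      exact ⟨a, by simpa using ha⟩
    obtain ⟨c, hc, h⟩ := Finset.exists_min_image GG.toFinset Prod.snd hne
    exact ⟨c, by simpa using hc, fun c' hc' => h c' (by simpa using hc')⟩
  have hΦP : ∀ Q ∈ Φ, ∀ c ∈ GG, IsP c.2 (fun v => Q v - c.1 v) → IsP (c.2 + 1) Q := by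
    intro Q hQ c hc h
    have := h.succ.add (hGG c hc)
    simpa using this
  refine focus BB hinter hshift hsynd x Φ c1.1 ?_ ?_ B hB hBn N
  · intro Q hQ
    obtain ⟨c, hc, h⟩ := hΦ Q hQ
    exact (hΦP Q hQ c hc h).map_zero
  intro W C hC hCn N'
  let R : (V → ℤ) × V → (V → ℤ) := fun q v => q.1 (v + q.2) - q.1 q.2 - c1.1 v
  let Φ' : Finset (V → ℤ) := (Φ ×ˢ W).image R
  let Y : Multiset ((V → ℤ) × ℕ) :=
    if c1.2 = 0 then 0 else (Φ'.filter (IsP c1.2)).val.map fun r => (r, c1.2 - 1)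
  let G' : Multiset ((V → ℤ) × ℕ) :=
    (GG.erase c1).map (fun c => ((fun v => c.1 v - c1.1 v), c.2)) + Y
  let Φ2 := Φ'.filter fun r => ∃ c ∈ G', IsP c.2 (fun v => r v - c.1 v)
  have hDM : Multiset.IsDershowitzMannaLT (G'.map Prod.snd) M := by
    refine ⟨(GG.erase c1).map Prod.snd, Y.map Prod.snd, {c1.2}, by simp, ?_, ?_, ?_⟩
    · simp [G', Multiset.map_map]
    · rw [← hGM]
      conv_lhs => rw [← Multiset.cons_erase hc1]
      rw [Multiset.map_cons, ← Multiset.singleton_add, add_comm]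
    · intro y hy
      refine ⟨c1.2, by simp, ?_⟩
      by_cases h0 : c1.2 = 0
      · simp [Y, h0] at hy
      · simp only [Y, h0, if_false, Multiset.map_map, Multiset.mem_map, Function.comp] at hy
        obtain ⟨_, _, rfl⟩ := hy
        omega
  have hG' : ∀ c ∈ G', IsP (c.2 + 1) c.1 := by
    intro c hc
    rcases Multiset.mem_add.1 hc with hc | hc
    · obtain ⟨c', hc', rfl⟩ := Multiset.mem_map.1 hc
      have hc' := Multiset.mem_of_mem_erase hc'
      exact (hGG c' hc').sub ((hGG c1 hc1).mono (by have := hmin c' hc'; omega))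
    · by_cases h0 : c1.2 = 0
      · simp [Y, h0] at hc
      · simp only [Y, h0, if_false, Multiset.mem_map] at hc
        obtain ⟨r, hr, rfl⟩ := hc
        have := (Finset.mem_filter.1 hr).2
        simp only
        rwa [Nat.sub_add_cancel (by omega)]
  obtain ⟨H, hHn, hHN, b, hb, hbQ⟩ := IH _ hDM G' rfl hG' Φ2
    (fun r hr => (Finset.mem_filter.1 hr).2) C hC hCn N'
  refine ⟨H, hHn, hHN, b, hb, ?_⟩
  intro Q hQ w hw
  have hmem : R (Q, w) ∈ Φ' := Finset.mem_image_of_mem _ (Finset.mem_product.2 ⟨hQ, hw⟩)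
  by_cases h2 : R (Q, w) ∈ Φ2
  · exact hbQ _ h2
  have h2' : ∀ c ∈ G', ¬ IsP c.2 (fun v => R (Q, w) v - c.1 v) := by
    intro c hc h
    exact h2 (Finset.mem_filter.2 ⟨hmem, c, hc, h⟩)
  obtain ⟨c, hc, hcQ⟩ := hΦ Q hQ
  have hRc : IsP c.2 (fun v => R (Q, w) v - (c.1 v - c1.1 v)) := by
    have := hcQ.add ((hΦP Q hQ c hc hcQ) w)
    convert this using 2
    simp only [R]
    ring
  by_cases hcc : c = c1
  · subst hcc
    have hR' : IsP c.2 (R (Q, w)) := by simpa using hRc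
    by_cases h0 : c.2 = 0
    · have : R (Q, w) (∑ t ∈ H, x t) = 0 := by
        rw [h0] at hR'
        exact hR' _
      change b + R (Q, w) (∑ t ∈ H, x t) ∈ C
      rw [this]; simpa using hb
    · exfalso
      refine h2' (R (Q, w), c.2 - 1) ?_ (by simpa using isP_zero _)
      refine Multiset.mem_add.2 (Or.inr ?_)
      simp only [Y, h0, if_false]
      exact Multiset.mem_map_of_mem (fun r => (r, c.2 - 1))
        (Finset.mem_filter.2 ⟨hmem, hR'⟩)
  · exfalso
    refine h2' ((fun v => c.1 v - c1.1 v), c.2) ?_ hRc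
    refine Multiset.mem_add.2 (Or.inl ?_)
    exact Multiset.mem_map_of_mem (fun c : (V → ℤ) × ℕ => ((fun v => c.1 v - c1.1 v), c.2))
      ((Multiset.mem_erase_of_ne hcc).2 hc)
section ultra
open Filter
attribute [local instance] Ultrafilter.add Ultrafilter.addSemigroup

lemma uAdd_eq (p q : Ultrafilter ℕ) : uAdd p q = p + q :=
  Ultrafilter.coe_inj.mp (Filter.ext' fun _ => Iff.rfl)

lemma map_cast_add (p q : Ultrafilter ℕ) :
    (p + q).map ((↑) : ℕ → ℤ) = p.map ((↑) : ℕ → ℤ) + q.map ((↑) : ℕ → ℤ) := by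
  refine Ultrafilter.coe_inj.mp (Filter.ext' fun P => ?_)
  rw [Ultrafilter.eventually_add]
  simp only [Ultrafilter.coe_map, Filter.eventually_map]
  rw [Ultrafilter.eventually_add]
  simp only [Nat.cast_add]

lemma map_cast_inj {p q : Ultrafilter ℕ}
    (h : p.map ((↑) : ℕ → ℤ) = q.map ((↑) : ℕ → ℤ)) : p = q := by
  apply Ultrafilter.coe_inj.mp
  have := congrArg (fun u : Ultrafilter ℤ => (u : Filter ℤ)) h
  simp only [Ultrafilter.coe_map] at this
  exact Filter.map_injective Nat.cast_injective this

lemma minimal_le_cofinite {p : Ultrafilter ℕ} (hp : IsMinimalIdempotent p) :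
    (p : Filter ℕ) ≤ cofinite := by
  rcases p.le_cofinite_or_eq_pure with h | ⟨n, rfl⟩
  · exact h
  exfalso
  obtain ⟨h1, h2⟩ := hp
  have hn : n = 0 := by
    unfold IdempotentUF at h1
    rw [uAdd_eq] at h1
    have h3 : ∀ᶠ x in (pure n + pure n : Ultrafilter ℕ), x = n := by
      rw [h1]; simp
    rw [Ultrafilter.eventually_add] at h3
    simpa using h3
  subst hn
  obtain ⟨q, hq, hqq⟩ := exists_idempotent_in_compact_add_subsemigroup
    (M := Ultrafilter ℕ) Ultrafilter.continuous_add_left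
    {q | {x : ℕ | x ≠ 0} ∈ q} ⟨pure 1, by simp⟩ (ultrafilter_isClosed_basic _).isCompact (by
      intro a ha b hb
      have : ∀ᶠ x in (a + b : Ultrafilter ℕ), x ≠ 0 := by
        rw [Ultrafilter.eventually_add]
        have ha' : ∀ᶠ x in (a : Filter ℕ), x ≠ 0 := ha
        filter_upwards [ha'] with x hx
        exact Eventually.of_forall fun y => by omega
      exact this)
  have hq0 : q = pure 0 := by
    apply h2 q
    · unfold IdempotentUF; rw [uAdd_eq, hqq]
    · rw [uAdd_eq]
      refine Ultrafilter.coe_inj.mp (Filter.ext' fun P => ?_)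
      rw [Ultrafilter.eventually_add]
      simp
    · rw [uAdd_eq]
      refine Ultrafilter.coe_inj.mp (Filter.ext' fun P => ?_)
      rw [Ultrafilter.eventually_add]
      simp
  rw [hq0] at hq
  simp at hq

lemma minimal_absorb {p : Ultrafilter ℕ} (hp : IsMinimalIdempotent p) (q : Ultrafilter ℤ) :
    ∃ r : Ultrafilter ℤ, p.map ((↑) : ℕ → ℤ) = r + (q + p.map ((↑) : ℕ → ℤ)) := by
  have hcof := minimal_le_cofinite hp
  obtain ⟨h1, h2⟩ := hp
  unfold IdempotentUF at h1 h2
  simp only [uAdd_eq] at h1 h2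
  have hpp : p.map ((↑) : ℕ → ℤ) + p.map ((↑) : ℕ → ℤ) = p.map ((↑) : ℕ → ℤ) := by
    rw [← map_cast_add, h1]
  have hpos : ∀ n : ℤ, ∀ᶠ y in (p.map ((↑) : ℕ → ℤ) : Ultrafilter ℤ),
      n + y ∈ Set.range ((↑) : ℕ → ℤ) := by
    intro n
    simp only [Ultrafilter.coe_map, Filter.eventually_map]
    have : ∀ᶠ y : ℕ in cofinite, n.natAbs ≤ y := by
      rw [Nat.cofinite_eq_atTop]; exact eventually_ge_atTop _
    filter_upwards [hcof this] with y hy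
    exact ⟨(n + y).toNat, by omega⟩
  set p' := p.map ((↑) : ℕ → ℤ) with hp'
  obtain ⟨e, ⟨r, hr⟩, hee⟩ := exists_idempotent_in_compact_add_subsemigroup
    (M := Ultrafilter ℤ) Ultrafilter.continuous_add_left
    (Set.range fun r => r + (q + p')) (Set.range_nonempty _)
    (isCompact_range (Ultrafilter.continuous_add_left _)) (by
      rintro _ ⟨a, rfl⟩ _ ⟨b, rfl⟩
      exact ⟨a + (q + p') + b, by simp only [add_assoc]⟩)
  simp only at hr
  have hep : e + p' = e := by rw [← hr, add_assoc, add_assoc, hpp]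
  have hq2 : (p' + e) + p' = p' + e := by rw [add_assoc, hep]
  have hrange : Set.range ((↑) : ℕ → ℤ) ∈ p' + e := by
    rw [← hq2]
    have : ∀ᶠ x in (p' + e + p' : Ultrafilter ℤ), x ∈ Set.range ((↑) : ℕ → ℤ) := by
      rw [Ultrafilter.eventually_add]
      exact Eventually.of_forall hpos
    exact this
  obtain ⟨q0, hq0⟩ : ∃ q0 : Ultrafilter ℕ, q0.map ((↑) : ℕ → ℤ) = p' + e := by
    refine ⟨(p' + e).comap Nat.cast_injective hrange, ?_⟩
    apply Ultrafilter.coe_inj.mp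
    simp only [Ultrafilter.coe_map, Ultrafilter.coe_comap]
    exact Filter.map_comap_of_mem hrange
  have : q0 = p := by
    apply h2
    · apply map_cast_inj
      rw [map_cast_add, hq0, add_assoc, ← add_assoc e p' e, hep, hee]
    · apply map_cast_inj
      rw [map_cast_add, hq0, ← hp', hq2]
    · apply map_cast_inj
      rw [map_cast_add, hq0, ← hp', ← add_assoc, hpp]
  refine ⟨p' + r, ?_⟩
  rw [add_assoc, hr, ← hq0, this]

lemma minimal_synd {p : Ultrafilter ℕ} (hp : IsMinimalIdempotent p) (C : Set ℤ) (n0 : ℤ)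
    (h0 : ∀ᶠ y : ℕ in (p : Filter ℕ), n0 + (y : ℤ) ∈ C) :
    ∃ E : Finset ℤ, ∀ n : ℤ, ∃ e ∈ E, ∀ᶠ y : ℕ in (p : Filter ℕ), n + e + (y : ℤ) ∈ C := by
  classical
  by_contra hno
  push Not at hno
  let f : Finset ℤ → Filter ℤ := fun E =>
    𝓟 {n | ∀ e ∈ E, ¬ ∀ᶠ y : ℕ in (p : Filter ℕ), n + e + (y : ℤ) ∈ C}
  have hne : (⨅ E, f E).NeBot := by
    refine Filter.iInf_neBot_of_directed ?_ ?_
    · intro E E'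
      refine ⟨E ∪ E', ?_, ?_⟩
      · simp only [f, ge_iff_le, Filter.le_principal_iff, Filter.mem_principal]
        intro n hn e he
        exact hn e (Finset.mem_union_left _ he)
      · simp only [f, ge_iff_le, Filter.le_principal_iff, Filter.mem_principal]
        intro n hn e he
        exact hn e (Finset.mem_union_right _ he)
    · intro E
      obtain ⟨n, hn⟩ := hno E
      exact Filter.principal_neBot_iff.2 ⟨n, fun e he => Ultrafilter.eventually_not.1 (hn e he)⟩
  let q : Ultrafilter ℤ := Ultrafilter.of (⨅ E, f E)
  have hq : ∀ e : ℤ, ∀ᶠ n in (q : Filter ℤ), ¬ ∀ᶠ y : ℕ in (p : Filter ℕ), n + e + (y : ℤ) ∈ C := by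
    intro e
    have h1 : (q : Filter ℤ) ≤ f {e} := (Ultrafilter.of_le _).trans (iInf_le _ _)
    have h2 := Filter.le_principal_iff.1 h1
    filter_upwards [h2] with n hn
    exact hn e (by simp)
  obtain ⟨r, hr⟩ := minimal_absorb hp q
  have h1 : ∀ᶠ z in (p.map ((↑) : ℕ → ℤ) : Ultrafilter ℤ), n0 + z ∈ C := by
    simpa only [Ultrafilter.coe_map, Filter.eventually_map] using h0
  rw [hr, Ultrafilter.eventually_add] at h1
  obtain ⟨e, he⟩ := h1.exists
  rw [Ultrafilter.eventually_add] at he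
  obtain ⟨n, hn1, hn2⟩ := (he.and (hq (n0 + e))).exists
  apply hn2
  simp only [Ultrafilter.coe_map, Filter.eventually_map] at hn1
  filter_upwards [hn1] with y hy
  convert hy using 1
  ring

lemma polyJ {p : Ultrafilter ℕ} (hp : IsMinimalIdempotent p) (B : Set ℕ) (hB : B ∈ p)
    (F T : Finset (ℕ → ℕ)) (hT : ∀ P ∈ T, IsPolyZeroConst P) (N : ℕ) :
    ∃ (a : ℕ) (H : Finset ℕ), H.Nonempty ∧ (∀ t ∈ H, N ≤ t) ∧
      ∀ f ∈ F, ∀ P ∈ T, a + P (∑ t ∈ H, f t) ∈ B := by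
  classical
  let R : Set ℤ → Set ℤ := fun C => {n | ∀ᶠ y : ℕ in (p : Filter ℕ), n + (y : ℤ) ∈ C}
  unfold IsPolyZeroConst at hT
  choose! pol hpol0 hpol using hT
  let Qf : (ℕ → ℕ) × (ℕ → ℕ) → (((ℕ → ℕ) → ℤ) → ℤ) := fun q v =>
    ((pol q.2).map (Nat.castRingHom ℤ)).eval (v q.1)
  let Φ := (F ×ˢ T).image Qf
  have hΦ : ∀ Q ∈ Φ, ∃ k, IsP (k + 1) Q := by
    intro Q hQ
    obtain ⟨⟨f, P⟩, hfP, rfl⟩ := Finset.mem_image.1 hQ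
    refine ⟨((pol P).map (Nat.castRingHom ℤ)).natDegree, ?_⟩
    refine (isP_eval f _ _ ?_ le_rfl).succ
    rw [Polynomial.coeff_map, hpol0 P (Finset.mem_product.1 hfP).2]; simp
  choose! deg hdeg using hΦ
  obtain ⟨H, hHn, hHN, b, hb, hbQ⟩ := polyRec (V := (ℕ → ℕ) → ℤ) (Set.range R) (by
      rintro _ ⟨C, rfl⟩ _ ⟨D, rfl⟩
      exact ⟨C ∩ D, by ext n; exact Filter.eventually_and⟩) (by
      rintro _ ⟨C, rfl⟩ n
      refine ⟨{m | m + n ∈ C}, ?_⟩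
      ext m
      simp only [R, Set.mem_ofPred_eq]
      refine Filter.eventually_congr (Eventually.of_forall fun y => ?_)
      rw [add_right_comm]) (by
      rintro _ ⟨C, rfl⟩ ⟨n0, hn0⟩
      exact minimal_synd hp C n0 hn0)
    (fun t f => (f t : ℤ)) _ (Φ.val.map fun Q => (Q, deg Q)) rfl (by
      intro c hc
      obtain ⟨Q, hQ, rfl⟩ := Multiset.mem_map.1 hc
      exact hdeg Q hQ) Φ (by
      intro Q hQ
      exact ⟨(Q, deg Q), Multiset.mem_map_of_mem (fun Q => (Q, deg Q)) hQ,
        by simpa using isP_zero _⟩)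
    (R (Set.image ((↑) : ℕ → ℤ) B)) ⟨_, rfl⟩ ⟨0, by
      change ∀ᶠ y : ℕ in (p : Filter ℕ), (0 : ℤ) + (y : ℤ) ∈ Set.image ((↑) : ℕ → ℤ) B
      filter_upwards [hB] with y hy
      exact ⟨y, hy, by simp⟩⟩ N
  have hcof := minimal_le_cofinite hp
  have hpos : ∀ᶠ y : ℕ in (p : Filter ℕ), b.natAbs ≤ y := by
    apply hcof
    rw [Nat.cofinite_eq_atTop]; exact eventually_ge_atTop _
  have hall : ∀ᶠ y : ℕ in (p : Filter ℕ), ∀ Q ∈ Φ,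
      b + Q (∑ t ∈ H, fun f : ℕ → ℕ => (f t : ℤ)) + (y : ℤ) ∈ Set.image ((↑) : ℕ → ℤ) B :=
    (Filter.eventually_all_finset Φ).2 hbQ
  obtain ⟨y, hy1, hy2⟩ := (hpos.and hall).exists
  refine ⟨(b + y).toNat, H, hHn, hHN, ?_⟩
  intro f hf P hP
  obtain ⟨z, hz, hzeq⟩ := hy2 (Qf (f, P))
    (Finset.mem_image_of_mem _ (Finset.mem_product.2 ⟨hf, hP⟩))
  have hval : Qf (f, P) (∑ t ∈ H, fun f : ℕ → ℕ => (f t : ℤ)) = ((P (∑ t ∈ H, f t) : ℕ) : ℤ) := by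
    simp only [Qf, Finset.sum_apply]
    rw [hpol P hP, ← Nat.cast_sum]
    exact Polynomial.eval_natCast_map (Nat.castRingHom ℤ) (pol P) _
  rw [hval] at hzeq
  have : (b + y).toNat + P (∑ t ∈ H, f t) = z := by omega
  rwa [this]
end ultra
section assembly
open Filter

/-- Largeness of a prefix: `j` coordinates, starting at `k`, are still to be chosen. -/
def Lg (A : Set (ℕ → ℕ)) (q : ℕ → Ultrafilter ℕ) : ℕ → ℕ → (ℕ → ℕ) → Prop
  | 0, _, v => v ∈ A
  | j + 1, k, v => ∀ᶠ x : ℕ in (q k : Filter ℕ), Lg A q j (k + 1) (Function.update v k x)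

lemma tensor_Lg (A' : Set (ℕ → ℕ)) (q : ℕ → Ultrafilter ℕ) : ∀ (m : ℕ)
    (p : Fin m → Ultrafilter ℕ) (A : Set (Fin m → ℕ)) (k : ℕ) (v : ℕ → ℕ),
    (∀ i : Fin m, q (k + i) = p i) →
    (∀ w ∈ A, ∀ v' : ℕ → ℕ, (∀ i < k, v' i = v i) → (∀ i : Fin m, v' (k + i) = w i) → v' ∈ A') →
    A ∈ tensor m p → Lg A' q m k v := by
  intro m
  induction m with
  | zero =>
    intro p A k v _ hA hmem
    have h0 : (fun i : Fin 0 => i.elim0) ∈ A := hmem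
    exact hA _ h0 v (fun _ _ => rfl) (fun i => i.elim0)
  | succ m ih =>
    intro p A k v hq hA hmem
    have h1 : ∀ᶠ x : ℕ in (p 0 : Filter ℕ),
        {w | Fin.cons x w ∈ A} ∈ tensor m (fun i => p i.succ) := hmem
    have hq0 : q k = p 0 := by simpa using hq 0
    change ∀ᶠ x : ℕ in (q k : Filter ℕ), _
    rw [hq0]
    filter_upwards [h1] with x hx
    refine ih (fun i => p i.succ) {w | Fin.cons x w ∈ A} (k + 1) (Function.update v k x) ?_ ?_ hx
    · intro i
      have := hq i.succ
      rw [← this]; congr 1; simp; omega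
    · intro w hw v' h2 h3
      refine hA _ hw v' ?_ ?_
      · intro i hi
        rw [h2 i (by omega), Function.update_of_ne (by omega)]
      · intro i
        refine Fin.cases ?_ (fun i => ?_) i
        · have := h2 k (by omega)
          simpa using this
        · have := h3 i
          simp only [Fin.cons_succ, Fin.val_succ]
          rw [← this]; congr 1; omega

/-- The set `B*` of the theory of idempotent ultrafilters. -/
def star (p : Ultrafilter ℕ) (B : Set ℕ) : Set ℕ :=
  {x | x ∈ B ∧ ∀ᶠ y : ℕ in (p : Filter ℕ), x + y ∈ B}

lemma star_large {p : Ultrafilter ℕ} (hp : IdempotentUF p) {B : Set ℕ}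
    (hB : ∀ᶠ y : ℕ in (p : Filter ℕ), y ∈ B) : ∀ᶠ y : ℕ in (p : Filter ℕ), y ∈ star p B := by
  have h1 : ∀ᶠ y : ℕ in (uAdd p p : Filter ℕ), y ∈ B := by
    unfold IdempotentUF at hp; rw [hp]; exact hB
  have h2 : ∀ᶠ x : ℕ in (p : Filter ℕ), ∀ᶠ y : ℕ in (p : Filter ℕ), x + y ∈ B := h1
  filter_upwards [hB, h2] with x hx hx2 using ⟨hx, hx2⟩

lemma star_shift {p : Ultrafilter ℕ} (hp : IdempotentUF p) {B : Set ℕ} {x : ℕ}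
    (hx : x ∈ star p B) : ∀ᶠ y : ℕ in (p : Filter ℕ), x + y ∈ star p B := by
  have := star_large hp (B := {y | x + y ∈ B}) hx.2
  filter_upwards [this] with y hy
  refine ⟨hy.1, ?_⟩
  filter_upwards [hy.2] with z hz
  have hz' : x + (y + z) ∈ B := hz
  rwa [add_assoc]

lemma IsPolyZeroConst.map_zero {P : ℕ → ℕ} (hP : IsPolyZeroConst P) : P 0 = 0 := by
  obtain ⟨Q, h0, h⟩ := hP
  rw [h, ← Polynomial.coeff_zero_eq_eval_zero, h0]

lemma IsPolyZeroConst.shift {P : ℕ → ℕ} (hP : IsPolyZeroConst P) (s : ℕ) :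
    ∃ Q, IsPolyZeroConst Q ∧ ∀ x, P (s + x) = P s + Q x := by
  obtain ⟨R, h0, h⟩ := hP
  let S := Polynomial.divX (Polynomial.taylor s R) * Polynomial.X
  refine ⟨fun x => S.eval x, ⟨S, by simp [S], fun x => rfl⟩, fun x => ?_⟩
  have h1 := Polynomial.divX_mul_X_add (Polynomial.taylor s R)
  have h2 := congrArg (Polynomial.eval x) h1
  rw [Polynomial.eval_add, Polynomial.eval_C, Polynomial.taylor_coeff_zero,
    Polynomial.taylor_eval] at h2
  rw [h, h, add_comm s x, ← h2, add_comm]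

/-- States: number of completed coordinates, their values, current partial sums. -/
abbrev St := ℕ × (ℕ → ℕ) × ℕ × ℕ

/-- The set from which the next coordinate has to be chosen. -/
def nextSet (A : Set (ℕ → ℕ)) (q : ℕ → Ultrafilter ℕ) (m k : ℕ) (v : ℕ → ℕ) : Set ℕ :=
  star (q k) {x | Lg A q (m - (k + 1)) (k + 1) (Function.update v k x)}

/-- Good states. -/
def GoodS (A : Set (ℕ → ℕ)) (q : ℕ → Ultrafilter ℕ) (T : Finset (ℕ → ℕ)) (m : ℕ) (σ : St) : Prop :=
  Lg A q (m - σ.1) σ.1 σ.2.1 ∧ (σ.1 < m → ∀ P ∈ T, ∀ᶠ y : ℕ in (q σ.1 : Filter ℕ),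
    σ.2.2.1 + P σ.2.2.2 + y ∈ nextSet A q m σ.1 σ.2.1)

lemma goodS_start {A : Set (ℕ → ℕ)} {q : ℕ → Ultrafilter ℕ} {T : Finset (ℕ → ℕ)} {m : ℕ}
    (hq : ∀ k, IsMinimalIdempotent (q k)) (hT : ∀ P ∈ T, IsPolyZeroConst P)
    {k : ℕ} {v : ℕ → ℕ} (h : Lg A q (m - k) k v) : GoodS A q T m (k, v, 0, 0) := by
  refine ⟨h, fun hk P hP => ?_⟩
  simp only at hk
  simp only [(hT P hP).map_zero, zero_add]
  refine star_large (hq k).1 ?_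
  have h1 : m - k = (m - (k + 1)) + 1 := by omega
  rw [h1] at h
  exact h

lemma step_exists {A : Set (ℕ → ℕ)} {q : ℕ → Ultrafilter ℕ} {T : Finset (ℕ → ℕ)} {m : ℕ}
    (hq : ∀ k, IsMinimalIdempotent (q k)) (hT : ∀ P ∈ T, IsPolyZeroConst P)
    (F : Finset (ℕ → ℕ)) (S : Finset St) (hS : ∀ σ ∈ S, GoodS A q T m σ) (k N : ℕ) :
    ∃ (a : ℕ) (H : Finset ℕ), H.Nonempty ∧ (∀ t ∈ H, N ≤ t) ∧
      ∀ σ ∈ S, σ.1 = k → k < m → ∀ f ∈ F, ∀ P ∈ T,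
        σ.2.2.1 + a + P (σ.2.2.2 + ∑ t ∈ H, f t) ∈ nextSet A q m k σ.2.1 := by
  classical
  have hsh : ∀ P ∈ T, ∀ s, ∃ Q, IsPolyZeroConst Q ∧ ∀ x, P (s + x) = P s + Q x :=
    fun P hP s => (hT P hP).shift s
  choose! sh hsh1 hsh2 using hsh
  let T' : Finset (ℕ → ℕ) := (T ×ˢ S).image fun z => sh z.1 z.2.2.2.2
  have hB : {y : ℕ | ∀ σ ∈ S, σ.1 = k → k < m → ∀ P ∈ T,
      σ.2.2.1 + P σ.2.2.2 + y ∈ nextSet A q m k σ.2.1} ∈ q k := by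
    change ∀ᶠ y : ℕ in (q k : Filter ℕ), ∀ σ ∈ S, σ.1 = k → k < m → ∀ P ∈ T,
      σ.2.2.1 + P σ.2.2.2 + y ∈ nextSet A q m k σ.2.1
    rw [Filter.eventually_all_finset]
    intro σ hσ
    by_cases h1 : σ.1 = k
    · by_cases h2 : k < m
      · have := (hS σ hσ).2 (by omega)
        rw [h1] at this
        have h3 := (Filter.eventually_all_finset T).2 this
        filter_upwards [h3] with y hy _ _ using hy
      · exact Eventually.of_forall fun y _ h => absurd h h2
    · exact Eventually.of_forall fun y h => absurd h h1
  obtain ⟨a, H, hHn, hHN, hH⟩ := polyJ (hq k) _ hB F T' (by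
    intro Q hQ
    obtain ⟨⟨P, σ⟩, h, rfl⟩ := Finset.mem_image.1 hQ
    exact hsh1 P (Finset.mem_product.1 h).1 _) N
  refine ⟨a, H, hHn, hHN, ?_⟩
  intro σ hσ hk hkm f hf P hP
  have := hH f hf (sh P σ.2.2.2)
    (Finset.mem_image.2 ⟨(P, σ), Finset.mem_product.2 ⟨hP, hσ⟩, rfl⟩) σ hσ hk hkm P hP
  rw [hsh2 P hP]
  convert this using 1
  ring

lemma exists_rec {X D : Type*} [Inhabited D] (Inv : Finset X → D → Prop)
    (Rel : Finset X → D → Finset X → D → Prop)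
    (h : ∀ (F : Finset X) (prev : Finset X → D), (∀ F', F' ⊂ F → Inv F' (prev F')) →
      ∃ d, Inv F d ∧ ∀ F', F' ⊂ F → Rel F' (prev F') F d) :
    ∃ g : Finset X → D, ∀ F, Inv F (g F) ∧ ∀ F', F' ⊂ F → Rel F' (g F') F (g F) := by
  classical
  have wf : WellFounded (fun F F' : Finset X => F ⊂ F') := Finset.isWellFounded_ssubset.wf
  let extd : (F : Finset X) → ((F' : Finset X) → F' ⊂ F → D) → Finset X → D :=
    fun F pr F' => if h : F' ⊂ F then pr F' h else default
  let step : (F : Finset X) → ((F' : Finset X) → F' ⊂ F → D) → D := fun F pr =>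
    if hh : ∀ F', F' ⊂ F → Inv F' (extd F pr F') then (h F (extd F pr) hh).choose else default
  let g : Finset X → D := wf.fix step
  have hg : ∀ F, g F = step F (fun F' _ => g F') := fun F => wf.fix_eq step F
  refine ⟨g, fun F => ?_⟩
  induction F using wf.induction with
  | _ F ih =>
  have he : ∀ F', F' ⊂ F → extd F (fun F' _ => g F') F' = g F' := by
    intro F' hF'
    simp only [extd, dif_pos hF']
  have hh : ∀ F', F' ⊂ F → Inv F' (extd F (fun F' _ => g F') F') := by
    intro F' hF'
    rw [he F' hF']
    exact (ih F' hF').1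
  have hgF : g F = (h F _ hh).choose := by
    rw [hg]
    simp only [step]
    rw [dif_pos hh]
  have hspec := (h F _ hh).choose_spec
  rw [← hgF] at hspec
  refine ⟨hspec.1, fun F' hF' => ?_⟩
  have := hspec.2 F' hF'
  rwa [he F' hF'] at this

lemma family_exists {A : Set (ℕ → ℕ)} {q : ℕ → Ultrafilter ℕ} {T : Finset (ℕ → ℕ)} {m : ℕ}
    (hq : ∀ k, IsMinimalIdempotent (q k)) (hT : ∀ P ∈ T, IsPolyZeroConst P)
    (hA : Lg A q m 0 (fun _ => 0)) :
    ∃ (α : Finset (ℕ → ℕ) → ℕ → ℕ) (H : Finset (ℕ → ℕ) → ℕ → Finset ℕ)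
      (S : Finset (ℕ → ℕ) → Finset St),
      (∀ F k, (H F k).Nonempty) ∧ (∀ F, ((0, (fun _ => 0), 0, 0) : St) ∈ S F) ∧
      (∀ F, ∀ σ ∈ S F, GoodS A q T m σ) ∧
      (∀ F F', F' ⊂ F → ∀ k, ∀ x ∈ H F' k, ∀ y ∈ H F k, x < y) ∧
      (∀ F F', F' ⊆ F → S F' ⊆ S F) ∧
      (∀ F F', F' ⊂ F → ∀ k v a s, (k, v, a, s) ∈ S F' → k < m → ∀ f ∈ F,
        (k, v, a + α F k, s + ∑ t ∈ H F k, f t) ∈ S F ∧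
        ∀ P ∈ T, (k + 1, Function.update v k (a + α F k + P (s + ∑ t ∈ H F k, f t)), 0, 0) ∈ S F) := by
  classical
  obtain ⟨g, hg⟩ := exists_rec (X := ℕ → ℕ) (D := (ℕ → ℕ) × (ℕ → Finset ℕ) × Finset St)
    (fun F d => (∀ k, (d.2.1 k).Nonempty) ∧ ((0, (fun _ => 0), 0, 0) : St) ∈ d.2.2 ∧
      ∀ σ ∈ d.2.2, GoodS A q T m σ)
    (fun F' d' F d => (∀ k, ∀ x ∈ d'.2.1 k, ∀ y ∈ d.2.1 k, x < y) ∧ d'.2.2 ⊆ d.2.2 ∧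
      ∀ k v a s, (k, v, a, s) ∈ d'.2.2 → k < m → ∀ f ∈ F,
        (k, v, a + d.1 k, s + ∑ t ∈ d.2.1 k, f t) ∈ d.2.2 ∧
        ∀ P ∈ T, (k + 1, Function.update v k (a + d.1 k + P (s + ∑ t ∈ d.2.1 k, f t)), 0, 0)
          ∈ d.2.2) (by
    intro F prev hprev
    let S0 : Finset St := insert (0, (fun _ => 0), 0, 0) (F.ssubsets.biUnion fun F' => (prev F').2.2)
    have hS0 : ∀ σ ∈ S0, GoodS A q T m σ := by
      intro σ hσ
      rcases Finset.mem_insert.1 hσ with rfl | hσ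
      · exact goodS_start hq hT hA
      · obtain ⟨F', hF', hσ⟩ := Finset.mem_biUnion.1 hσ
        exact (hprev F' (Finset.mem_ssubsets.1 hF')).2.2 σ hσ
    have hst := fun k => step_exists hq hT F S0 hS0 k
      (F.ssubsets.sup (fun F' => ((prev F').2.1 k).sup id) + 1)
    choose a H hHn hHN hH using hst
    let stp : St × (ℕ → ℕ) → St := fun z =>
      (z.1.1, z.1.2.1, z.1.2.2.1 + a z.1.1, z.1.2.2.2 + ∑ t ∈ H z.1.1, z.2 t)
    let cls : (St × (ℕ → ℕ)) × (ℕ → ℕ) → St := fun z =>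
      (z.1.1.1 + 1, Function.update z.1.1.2.1 z.1.1.1 (z.1.1.2.2.1 + a z.1.1.1 +
        z.2 (z.1.1.2.2.2 + ∑ t ∈ H z.1.1.1, z.1.2 t)), 0, 0)
    let S1 := S0.filter fun σ => σ.1 < m
    let S : Finset St := S0 ∪ ((S1 ×ˢ F).image stp ∪ ((S1 ×ˢ F) ×ˢ T).image cls)
    refine ⟨(a, H, S), ⟨hHn, Finset.mem_union_left _ (Finset.mem_insert_self _ _), ?_⟩, ?_⟩
    · intro σ hσ
      rcases Finset.mem_union.1 hσ with hσ | hσ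
      · exact hS0 σ hσ
      rcases Finset.mem_union.1 hσ with hσ | hσ
      · obtain ⟨⟨τ, f⟩, hz, rfl⟩ := Finset.mem_image.1 hσ
        obtain ⟨h1, hf⟩ := Finset.mem_product.1 hz
        obtain ⟨hτ, hk⟩ := Finset.mem_filter.1 h1
        refine ⟨(hS0 τ hτ).1, fun _ P hP => ?_⟩
        exact star_shift (hq _).1 (hH τ.1 τ hτ rfl hk f hf P hP)
      · obtain ⟨⟨⟨τ, f⟩, P⟩, hz, rfl⟩ := Finset.mem_image.1 hσ
        obtain ⟨hz, hP⟩ := Finset.mem_product.1 hz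
        obtain ⟨h1, hf⟩ := Finset.mem_product.1 hz
        obtain ⟨hτ, hk⟩ := Finset.mem_filter.1 h1
        exact goodS_start hq hT (hH τ.1 τ hτ rfl hk f hf P hP).1
    · intro F' hF'
      have hsub : (prev F').2.2 ⊆ S0 := fun σ hσ => Finset.mem_insert_of_mem
        (Finset.mem_biUnion.2 ⟨F', Finset.mem_ssubsets.2 hF', hσ⟩)
      refine ⟨?_, hsub.trans Finset.subset_union_left, ?_⟩
      · intro k x hx y hy
        have h1 := hHN k y hy
        have h2 : id x ≤ ((prev F').2.1 k).sup id := Finset.le_sup hx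
        have h3 : ((prev F').2.1 k).sup id ≤ F.ssubsets.sup (fun F' => ((prev F').2.1 k).sup id) :=
          Finset.le_sup (f := fun F' => ((prev F').2.1 k).sup id) (Finset.mem_ssubsets.2 hF')
        simp only [id] at h2
        omega
      · intro k v b s hσ hk f hf
        have h1 : ((k, v, b, s), f) ∈ S1 ×ˢ F :=
          Finset.mem_product.2 ⟨Finset.mem_filter.2 ⟨hsub hσ, hk⟩, hf⟩
        refine ⟨Finset.mem_union_right _ (Finset.mem_union_left _
          (Finset.mem_image.2 ⟨((k, v, b, s), f), h1, rfl⟩)), fun P hP => ?_⟩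
        exact Finset.mem_union_right _ (Finset.mem_union_right _
          (Finset.mem_image.2 ⟨(((k, v, b, s), f), P), Finset.mem_product.2 ⟨h1, hP⟩, rfl⟩)))
  refine ⟨fun F => (g F).1, fun F => (g F).2.1, fun F => (g F).2.2, fun F => (hg F).1.1,
    fun F => (hg F).1.2.1, fun F => (hg F).1.2.2, fun F F' h => ((hg F).2 F' h).1, ?_,
    fun F F' h => ((hg F).2 F' h).2.2⟩
  intro F F' h
  rcases h.eq_or_ssubset with rfl | h
  · exact Finset.Subset.refl _
  · exact ((hg F).2 F' h).2.1

end assembly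
/-- Multidimensional Stronger Polynomial Central Sets Theorem II (finitary form). -/
theorem multidimensional_stronger_polynomial_CST_II (m : ℕ) (hm : 1 ≤ m)
    (p : Fin m → Ultrafilter ℕ) (hp : ∀ i, IsMinimalIdempotent (p i))
    (A : Set (Fin m → ℕ)) (hA : A ∈ tensor m p)
    (T : Finset (ℕ → ℕ)) (hT : T.Nonempty) (hTP : ∀ P ∈ T, IsPolyZeroConst P) :
    ∃ (α : Fin m → Finset (ℕ → ℕ) → ℕ) (H : Fin m → Finset (ℕ → ℕ) → Finset ℕ),
      (∀ (j : Fin m) (F : Finset (ℕ → ℕ)), F.Nonempty → (H j F).Nonempty) ∧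
      (∀ (j : Fin m) (F G : Finset (ℕ → ℕ)), F.Nonempty → F ⊂ G →
        ∀ x ∈ H j F, ∀ y ∈ H j G, x < y) ∧
      (∀ n : ℕ, m ≤ n → ∀ G : Fin n → Finset (ℕ → ℕ),
        (∀ i, (G i).Nonempty) → (∀ i j, i < j → G i ⊂ G j) →
        ∀ f : Fin n → ℕ → ℕ, (∀ i, f i ∈ G i) →
        ∀ β : Fin m → Finset (Fin n),
          (∀ l, (β l).Nonempty) →
          (∀ l l' : Fin m, l < l' → ∀ x ∈ β l, ∀ y ∈ β l', x < y) →
          ∀ P : Fin m → ℕ → ℕ, (∀ l, P l ∈ T) →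
          (fun l => (∑ i ∈ β l, α l (G i)) +
              P l (∑ i ∈ β l, ∑ t ∈ H l (G i), f i t)) ∈ A) := by
  classical
  let q : ℕ → Ultrafilter ℕ := fun k => if h : k < m then p ⟨k, h⟩ else p ⟨0, hm⟩
  have hq : ∀ k, IsMinimalIdempotent (q k) := by
    intro k
    by_cases h : k < m
    · simp only [q, dif_pos h]; exact hp _
    · simp only [q, dif_neg h]; exact hp _
  let A' : Set (ℕ → ℕ) := {v | (fun i : Fin m => v i) ∈ A}
  have hLg : Lg A' q m 0 (fun _ => 0) := by
    refine tensor_Lg A' q m p A 0 _ ?_ ?_ hA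
    · intro i
      simp [q]
    · intro w hw v' _ h
      have : (fun i : Fin m => v' i) = w := by
        funext i
        simpa using h i
      change (fun i : Fin m => v' i) ∈ A
      rwa [this]
  obtain ⟨α, H, S, hHn, hstart, hgood, hHlt, hmono, hstep⟩ := family_exists hq hTP hLg
  refine ⟨fun l F => α F l, fun l F => H F l, fun j F _ => hHn F j,
    fun j F G _ hFG => hHlt G F hFG j, ?_⟩
  intro n _ G hGn hG f hf β hβn hβ P hP
  let x : ℕ → ℕ := fun l => if h : l < m then
    (∑ i ∈ β ⟨l, h⟩, α (G i) l) + P ⟨l, h⟩ (∑ i ∈ β ⟨l, h⟩, ∑ t ∈ H (G i) l, f i t) else 0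
  let vl : ℕ → ℕ → ℕ := fun l i => if i < l then x i else 0
  have hvl : ∀ l, vl (l + 1) = Function.update (vl l) l (x l) := by
    intro l
    funext i
    by_cases h : i = l
    · subst h; simp [vl]
    · rw [Function.update_of_ne h]
      simp only [vl]
      by_cases h2 : i < l
      · rw [if_pos h2, if_pos (by omega)]
      · rw [if_neg h2, if_neg (by omega)]
  let W : Fin n → Finset (ℕ → ℕ) := fun i =>
    if (i : ℕ) = 0 then ∅ else G ⟨i - 1, by omega⟩
  have hWG : ∀ i, W i ⊂ G i := by
    intro i
    by_cases h : (i : ℕ) = 0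
    · simp only [W, if_pos h]
      exact Finset.empty_ssubset.2 (hGn i)
    · simp only [W, if_neg h]
      exact hG _ _ (by rw [Fin.lt_def]; simp only; omega)
  have hGW : ∀ i j, j < i → G j ⊆ W i := by
    intro i j hji
    rw [Fin.lt_def] at hji
    have h : (i : ℕ) ≠ 0 := by omega
    simp only [W, if_neg h]
    by_cases h2 : (j : ℕ) = i - 1
    · have : j = ⟨i - 1, by omega⟩ := Fin.ext h2
      rw [← this]
    · exact (hG _ _ (by rw [Fin.lt_def]; simp only; omega)).subset
  have claim : ∀ l, l ≤ m → ∀ U : Finset (ℕ → ℕ),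
      (∀ l' : Fin m, (l' : ℕ) < l → ∀ i ∈ β l', G i ⊆ U) → (l, vl l, 0, 0) ∈ S U := by
    intro l
    induction l with
    | zero =>
      intro _ U _
      have : vl 0 = fun _ => 0 := by funext i; simp [vl]
      rw [this]
      exact hstart U
    | succ l ih =>
      intro hl U hU
      have hlm : l < m := by omega
      have block : ∀ γ : Finset (Fin n), γ ⊆ β ⟨l, hlm⟩ → ∀ U : Finset (ℕ → ℕ),
          (∀ l' : Fin m, (l' : ℕ) < l → ∀ i ∈ β l', G i ⊆ U) → (∀ i ∈ γ, G i ⊆ U) →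
          (l, vl l, ∑ i ∈ γ, α (G i) l, ∑ i ∈ γ, ∑ t ∈ H (G i) l, f i t) ∈ S U := by
        intro γ
        induction γ using Finset.induction_on_max with
        | empty =>
          intro _ U hU _
          simpa using ih (by omega) U hU
        | insert i γ hi ihγ =>
          intro hγ U hU hγU
          have hprev := ihγ ((Finset.subset_insert i γ).trans hγ) (W i)
            (fun l' hl' j hj => hGW i j (hβ l' ⟨l, hlm⟩ hl' j hj i (hγ (Finset.mem_insert_self _ _))))
            (fun j hj => hGW i j (hi j hj))
          have hnot : i ∉ γ := fun h => lt_irrefl _ (hi i h)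
          have := (hstep (G i) (W i) (hWG i) _ _ _ _ hprev hlm (f i) (hf i)).1
          rw [Finset.sum_insert hnot, Finset.sum_insert hnot, add_comm (α (G i) l),
            add_comm (∑ t ∈ H (G i) l, f i t)]
          exact hmono U (G i) (hγU i (Finset.mem_insert_self _ _)) this
      set i := (β ⟨l, hlm⟩).max' (hβn _) with hi
      have him : i ∈ β ⟨l, hlm⟩ := Finset.max'_mem _ _
      have hprev := block ((β ⟨l, hlm⟩).erase i) (Finset.erase_subset _ _) (W i)
        (fun l' hl' j hj => hGW i j (hβ l' ⟨l, hlm⟩ hl' j hj i him))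
        (fun j hj => hGW i j (lt_of_le_of_ne (Finset.le_max' _ _ (Finset.mem_of_mem_erase hj))
          (Finset.ne_of_mem_erase hj)))
      have := (hstep (G i) (W i) (hWG i) _ _ _ _ hprev hlm (f i) (hf i)).2 (P ⟨l, hlm⟩) (hP _)
      rw [Finset.sum_erase_add _ _ him, Finset.sum_erase_add _ _ him] at this
      have hx : x l = (∑ i ∈ β ⟨l, hlm⟩, α (G i) l) +
          P ⟨l, hlm⟩ (∑ i ∈ β ⟨l, hlm⟩, ∑ t ∈ H (G i) l, f i t) := by
        simp only [x, dif_pos hlm]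
      rw [hvl, hx]
      exact hmono U (G i) (hU ⟨l, hlm⟩ (by simp) i him) this
  have hfin := hgood _ _ (claim m le_rfl (Finset.univ.biUnion G)
    (fun _ _ i _ => Finset.subset_biUnion_of_mem G (Finset.mem_univ i)))
  have hmem := hfin.1
  simp only [Nat.sub_self] at hmem
  have hmem2 : (fun i : Fin m => vl m i) ∈ A := hmem
  convert hmem2 using 1
  funext i
  simp [vl, x]

end MultiCST
end

section
/- Let m ∈ ℕ with m ≥ 1, let h : ℕ^m → ℕ be a polynomial in m variables with coefficients in ℕ and no constant term, and let A ⊆ ℕ. Then the following are equivalent: (1) there exist functions α : 𝒫_f(ℕ^ℕ) → ℕ and H : 𝒫_f(ℕ^ℕ) → 𝒫_f(ℕ) such that (a) whenever F ⊊ G in 𝒫_f(ℕ^ℕ), max H(F) < min H(G), and (b) whenever G₁ ⊊ G₂ ⊊ ⋯ ⊊ G_n ⊊ ⋯ is an infinite strictly increasing chain in 𝒫_f(ℕ^ℕ), f_i ∈ G_i for each i ∈ ℕ, and β₁ < ⋯ < β_m are in 𝒫_f(ℕ), then h(Σ_{i∈β₁}(α(G_i)+Σ_{t∈H(G_i)}f_i(t)),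 …, Σ_{i∈β_m}(α(G_i)+Σ_{t∈H(G_i)}f_i(t))) ∈ A; (2) there exists an idempotent ultrafilter p ∈ 𝒥 such that A belongs to the image of ⊗_{i=1}^m p under h (i.e., A ∈ h̃(⊗_{i=1}^m p), where h̃ denotes the pushforward of ultrafilters along h). -/
namespace MultiCST

open Filter

/-! ### Basic facts on sums of ultrafilters and J-sets -/

theorem mem_uAdd (p q : Ultrafilter ℕ) (S : Set ℕ) :
    S ∈ uAdd p q ↔ ∀ᶠ x in (p : Filter ℕ), ∀ᶠ y in (q : Filter ℕ), x + y ∈ S := Iff.rfl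

theorem idem_iff {p : Ultrafilter ℕ} (hp : IdempotentUF p) (P : ℕ → Prop) :
    (∀ᶠ x in (p : Filter ℕ), P x) ↔
      ∀ᶠ x in (p : Filter ℕ), ∀ᶠ y in (p : Filter ℕ), P (x + y) := by
  have h := mem_uAdd p p {x | P x}
  rw [hp] at h
  exact h

theorem IsJSet.mono {A B : Set ℕ} (hA : IsJSet A) (h : A ⊆ B) : IsJSet B := by
  intro F hF
  obtain ⟨a, β, hβ, H⟩ := hA F hF
  exact ⟨a, β, hβ, fun f hf => h (H f hf)⟩

/-- J-sets: the index set may be taken beyond any bound. -/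
theorem IsJSet.beyond {A : Set ℕ} (hA : IsJSet A) (n : ℕ) (F : Finset (ℕ → ℕ)) :
    ∃ (a : ℕ) (β : Finset ℕ), β.Nonempty ∧ (∀ t ∈ β, n < t) ∧ ∀ f ∈ F, a + ∑ t ∈ β, f t ∈ A := by
  classical
  obtain ⟨a, β, hβ, H⟩ := hA ((insert 0 F).image fun f t => f (t + (n + 1)))
    ((Finset.insert_nonempty _ _).image _)
  refine ⟨a, β.map (addRightEmbedding (n + 1)), hβ.map, ?_, ?_⟩
  · intro t ht
    simp only [Finset.mem_map, addRightEmbedding_apply] at ht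
    obtain ⟨s, -, rfl⟩ := ht
    omega
  · intro f hf
    have := H _ (Finset.mem_image_of_mem _ (Finset.mem_insert_of_mem hf))
    simpa [Finset.sum_map] using this

/-- J-sets are partition regular. -/
theorem IsJSet.union {A B : Set ℕ} (h : IsJSet (A ∪ B)) : IsJSet A ∨ IsJSet B := by
  classical
  by_contra hcon
  push Not at hcon
  obtain ⟨hA, hB⟩ := hcon
  simp only [IsJSet, not_forall] at hA hB
  obtain ⟨F₁, hF₁, h₁⟩ := hA
  obtain ⟨F₂, hF₂, h₂⟩ := hB
  set F := F₁ ∪ F₂ with hF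
  obtain ⟨ι, hι, hHJ⟩ := Combinatorics.Line.exists_mono_in_high_dimension F Bool
  obtain ⟨e, he⟩ := exists_injective_nat (ℕ × ι)
  obtain ⟨f₀, hf₀⟩ := hF₁
  have hf₀F : f₀ ∈ F := Finset.mem_union_left _ hf₀
  have : Nonempty F := ⟨⟨f₀, hf₀F⟩⟩
  let g : (ι → F) → (ℕ → ℕ) := fun w t => ∑ i, (w i : ℕ → ℕ) (e (t, i))
  obtain ⟨a, β, hβ, H⟩ := h (Finset.univ.image g) (Finset.univ_nonempty.image g)
  obtain ⟨l, c, hl⟩ := hHJ fun w => decide (a + ∑ t ∈ β, g w t ∈ A)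
  let V : Finset ι := Finset.univ.filter fun i => l.idxFun i = none
  let W : Finset ι := Finset.univ.filter fun i => ¬ l.idxFun i = none
  have hV : V.Nonempty := by
    obtain ⟨i, hi⟩ := l.proper
    exact ⟨i, by simp [V, hi]⟩
  let γ : Finset ℕ := (β ×ˢ V).map ⟨e, he⟩
  have hγ : γ.Nonempty := (hβ.product hV).map
  let a' : ℕ := a + ∑ t ∈ β, ∑ i ∈ W, (l ⟨f₀, hf₀F⟩ i : ℕ → ℕ) (e (t, i))
  have key : ∀ x : F, a' + ∑ t ∈ γ, (x : ℕ → ℕ) t = a + ∑ t ∈ β, g (l x) t := by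
    intro x
    have h1 : ∑ t ∈ γ, (x : ℕ → ℕ) t = ∑ t ∈ β, ∑ i ∈ V, (x : ℕ → ℕ) (e (t, i)) := by
      simp only [γ, Finset.sum_map, Finset.sum_product, Function.Embedding.coeFn_mk]
    rw [h1]
    simp only [a', add_assoc]
    rw [← Finset.sum_add_distrib]
    congr 1
    refine Finset.sum_congr rfl fun t _ => ?_
    simp only [g]
    rw [← Finset.sum_filter_add_sum_filter_not Finset.univ (fun i => l.idxFun i = none), add_comm]
    congr 1
    · refine Finset.sum_congr rfl fun i hi => ?_
      have : l.idxFun i = none := by simpa [V] using hi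
      rw [Combinatorics.Line.apply_none _ _ _ this]
    · refine Finset.sum_congr rfl fun i hi => ?_
      have : ¬ l.idxFun i = none := by simpa [W] using hi
      obtain ⟨y, hy⟩ := Option.ne_none_iff_exists'.1 this
      rw [Combinatorics.Line.apply_some hy, Combinatorics.Line.apply_some hy]
  by_cases hc : c = true
  · refine h₁ ⟨a', γ, hγ, fun f hf => ?_⟩
    have hfF : f ∈ F := Finset.mem_union_left _ hf
    have := hl ⟨f, hfF⟩
    rw [key ⟨f, hfF⟩]
    subst hc
    exact of_decide_eq_true this
  · refine h₂ ⟨a', γ, hγ, fun f hf => ?_⟩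
    have hfF : f ∈ F := Finset.mem_union_right _ hf
    have := hl ⟨f, hfF⟩
    rw [key ⟨f, hfF⟩]
    have hc' : c = false := by simpa using hc
    subst hc'
    have h3 := of_decide_eq_false this
    exact (H _ (Finset.mem_image_of_mem g (Finset.mem_univ (l ⟨f, hfF⟩)))).resolve_left h3

/-! ### From the ultrafilter to the combinatorial statement -/

/-- Iterated quantification along `p`, appending to the front of a list. -/
def iterEv (p : Ultrafilter ℕ) (P : List ℕ → Prop) : ℕ → List ℕ → Prop
  | 0, L => P L
  | k + 1, L => ∀ᶠ y in (p : Filter ℕ), iterEv p P k (y :: L)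

theorem iterEv_of_tensor (p : Ultrafilter ℕ) (P : List ℕ → Prop) :
    ∀ (k : ℕ) (S : Set (Fin k → ℕ)) (L : List ℕ), S ∈ tensor k (fun _ => p) →
      (∀ v ∈ S, P ((List.ofFn v).reverse ++ L)) → iterEv p P k L := by
  intro k
  induction k with
  | zero =>
    intro S L hS hP
    have : (fun i : Fin 0 => (i.elim0 : ℕ)) ∈ S := hS
    simpa [iterEv] using hP _ this
  | succ k ih =>
    intro S L hS hP
    have h1 : ∀ᶠ x in (p : Filter ℕ), {v : Fin k → ℕ | (Fin.cons x v : Fin (k + 1) → ℕ) ∈ S}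
        ∈ tensor k (fun _ => p) := hS
    refine h1.mono fun x hx => ih _ _ hx fun v hv => ?_
    have := hP _ hv
    simpa [List.ofFn_succ] using this

def Good (p : Ultrafilter ℕ) (P : List ℕ → Prop) (m : ℕ) (L : List ℕ) : Prop :=
  L.length ≤ m → iterEv p P (m - L.length) L

theorem Good.step {p : Ultrafilter ℕ} {P : List ℕ → Prop} {m : ℕ} {L : List ℕ}
    (h : Good p P m L) : ∀ᶠ y in (p : Filter ℕ), Good p P m (y :: L) := by
  by_cases hL : L.length < m
  · have h1 := h hL.le
    obtain ⟨k, hk⟩ : ∃ k, m - L.length = k + 1 := ⟨m - L.length - 1, by omega⟩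
    rw [hk] at h1
    refine Filter.Eventually.mono h1 fun y hy _ => ?_
    have : m - (y :: L).length = k := by simp; omega
    rw [this]
    exact hy
  · refine Filter.Eventually.of_forall fun y hy => ?_
    simp at hy
    omega

/-- Add a number to the head of a list. -/
def addHead (y : ℕ) : List ℕ → List ℕ
  | [] => [y]
  | x :: L => (x + y) :: L

def Ok (p : Ultrafilter ℕ) (P : List ℕ → Prop) (m : ℕ) (L : List ℕ) : Prop :=
  Good p P m L ∧ ∀ᶠ y in (p : Filter ℕ), Good p P m (addHead y L)

theorem Ok.step {p : Ultrafilter ℕ} (hp : IdempotentUF p) {P : List ℕ → Prop} {m : ℕ} {L : List ℕ}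
    (h : Ok p P m L) : ∀ᶠ y in (p : Filter ℕ), Ok p P m (y :: L) :=
  h.1.step.and ((idem_iff hp _).1 h.1.step)

theorem Ok.add {p : Ultrafilter ℕ} (hp : IdempotentUF p) {P : List ℕ → Prop} {m : ℕ} {L : List ℕ}
    (h : Ok p P m L) : ∀ᶠ y in (p : Filter ℕ), Ok p P m (addHead y L) := by
  cases L with
  | nil => exact h.step hp
  | cons x L =>
    refine h.2.and ?_
    have := (idem_iff hp _).1 h.2
    simpa [addHead, add_assoc] using this

/-- Well-founded construction along strict inclusion. -/
theorem exists_rec_s9 {X C : Type} (Spec : ∀ F : Finset X, (∀ F', F' ⊂ F → C) → C → Prop)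
    (hex : ∀ F prev, ∃ c, Spec F prev c) :
    ∃ c : Finset X → C, ∀ F, Spec F (fun F' _ => c F') (c F) := by
  choose g hg using hex
  have wf : WellFounded (fun F' F : Finset X => F' ⊂ F) := Finset.isWellFounded_ssubset.wf
  refine ⟨wf.fix g, fun F => ?_⟩
  conv => arg 3; rw [WellFounded.fix_eq]
  exact hg _ _

theorem exists_states {p : Ultrafilter ℕ} (hp : IdempotentUF p) (hJ : MemJ p)
    {P : List ℕ → Prop} {m : ℕ} (h0 : Ok p P m []) :
    ∃ (α : Finset (ℕ → ℕ) → ℕ) (H : Finset (ℕ → ℕ) → Finset ℕ)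
      (R : Finset (ℕ → ℕ) → Set (List ℕ)),
      (∀ F, (H F).Nonempty) ∧
      (∀ F G : Finset (ℕ → ℕ), F ⊂ G → ∀ x ∈ H F, ∀ y ∈ H G, x < y) ∧
      (∀ F, ∀ L ∈ R F, Ok p P m L) ∧
      (∀ F, ∀ f ∈ F, ∀ L, (L = [] ∨ ∃ F', F' ⊂ F ∧ L ∈ R F') →
        (α F + ∑ t ∈ H F, f t) :: L ∈ R F ∧ addHead (α F + ∑ t ∈ H F, f t) L ∈ R F) := by
  classical
  let C : Type := {c : ℕ × Finset ℕ × Set (List ℕ) // c.2.2.Finite ∧ ∀ L ∈ c.2.2, Ok p P m L}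
  let Spec : ∀ F : Finset (ℕ → ℕ), (∀ F', F' ⊂ F → C) → C → Prop := fun F prev c =>
    c.1.2.1.Nonempty ∧ (∀ F' (hF : F' ⊂ F), ∀ x ∈ (prev F' hF).1.2.1, ∀ y ∈ c.1.2.1, x < y) ∧
    (∀ f ∈ F, ∀ L, (L = [] ∨ ∃ F', ∃ hF : F' ⊂ F, L ∈ (prev F' hF).1.2.2) →
        (c.1.1 + ∑ t ∈ c.1.2.1, f t) :: L ∈ c.1.2.2 ∧
        addHead (c.1.1 + ∑ t ∈ c.1.2.1, f t) L ∈ c.1.2.2)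
  have hex : ∀ F prev, ∃ c, Spec F prev c := by
    intro F prev
    let U : Set (List ℕ) := {L | L = [] ∨ ∃ F', ∃ hF : F' ⊂ F, L ∈ (prev F' hF).1.2.2}
    have hUfin : U.Finite := by
      have h1 : (⋃ q : {F' // F' ⊂ F}, (prev q.1 q.2).1.2.2).Finite := by
        have : Finite {F' // F' ⊂ F} :=
          Set.Finite.to_subtype (s := {F' | F' ⊂ F})
            ((F.powerset.finite_toSet).subset fun F' h => by
              simpa using (show F' ⊂ F from h).subset)
        exact Set.finite_iUnion fun q => (prev q.1 q.2).2.1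
      refine ((Set.finite_singleton []).union h1).subset ?_
      rintro L (rfl | ⟨F', hF, hL⟩)
      · left; rfl
      · right; exact Set.mem_iUnion.2 ⟨⟨F', hF⟩, hL⟩
    have hUok : ∀ L ∈ U, Ok p P m L := by
      rintro L (rfl | ⟨F', hF, hL⟩)
      · exact h0
      · exact (prev F' hF).2.2 L hL
    have hD : ∀ᶠ y in (p : Filter ℕ), ∀ L ∈ U, Ok p P m (y :: L) ∧ Ok p P m (addHead y L) := by
      rw [Filter.eventually_all_finite hUfin]
      exact fun L hL => ((hUok L hL).step hp).and ((hUok L hL).add hp)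
    obtain ⟨n, hn⟩ : ∃ n, ∀ F' (hF : F' ⊂ F), ∀ x ∈ (prev F' hF).1.2.1, x ≤ n := by
      let K : Finset ℕ := F.ssubsets.attach.biUnion fun q =>
        (prev q.1 (Finset.mem_ssubsets.1 q.2)).1.2.1
      refine ⟨K.sup id, fun F' hF x hx => ?_⟩
      refine Finset.le_sup (f := id) (?_ : x ∈ K)
      exact Finset.mem_biUnion.2 ⟨⟨F', Finset.mem_ssubsets.2 hF⟩, Finset.mem_attach _ _, hx⟩
    obtain ⟨a, β, hβ, hβn, hv⟩ := (hJ _ hD).beyond n F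
    let R : Set (List ℕ) := Set.image2 (fun f L => (a + ∑ t ∈ β, f t) :: L) (F : Set (ℕ → ℕ)) U ∪
      Set.image2 (fun f L => addHead (a + ∑ t ∈ β, f t) L) (F : Set (ℕ → ℕ)) U
    refine ⟨⟨(a, β, R), ?_, ?_⟩, hβ, ?_, ?_⟩
    · exact (Set.Finite.image2 _ F.finite_toSet hUfin).union
        (Set.Finite.image2 _ F.finite_toSet hUfin)
    · rintro L (⟨f, hf, L, hL, rfl⟩ | ⟨f, hf, L, hL, rfl⟩)
      · exact (hv f hf L hL).1
      · exact (hv f hf L hL).2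
    · intro F' hF x hx y hy
      exact (hn F' hF x hx).trans_lt (hβn y hy)
    · intro f hf L hL
      exact ⟨Or.inl ⟨f, hf, L, hL, rfl⟩, Or.inr ⟨f, hf, L, hL, rfl⟩⟩
  obtain ⟨c, hc⟩ := exists_rec_s9 Spec hex
  refine ⟨fun F => (c F).1.1, fun F => (c F).1.2.1, fun F => (c F).1.2.2, fun F => (hc F).1,
    fun F G hFG => (hc G).2.1 F hFG, fun F => (c F).2.2, fun F f hf L hL => (hc F).2.2 f hf L ?_⟩
  rcases hL with h | ⟨F', h, h'⟩
  · exact Or.inl h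
  · exact Or.inr ⟨F', h, h'⟩

theorem blocks_mem {R : Finset (ℕ → ℕ) → Set (List ℕ)} {G : ℕ → Finset (ℕ → ℕ)}
    (hG : ∀ i j, i < j → G i ⊂ G j) {val : ℕ → ℕ}
    (hR : ∀ i L, (L = [] ∨ ∃ F', F' ⊂ G i ∧ L ∈ R F') →
      val i :: L ∈ R (G i) ∧ addHead (val i) L ∈ R (G i)) :
    ∀ b : List (Finset ℕ), (∀ β ∈ b, β.Nonempty) →
      b.Pairwise (fun β γ => ∀ x ∈ γ, ∀ y ∈ β, x < y) →
      ∀ n, (∀ β ∈ b, ∀ x ∈ β, x < n) →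
        (b.map (fun β => ∑ i ∈ β, val i) = [] ∨
          ∃ F', F' ⊂ G n ∧ b.map (fun β => ∑ i ∈ β, val i) ∈ R F') := by
  intro b
  induction b with
  | nil => intro _ _ n _; left; rfl
  | cons β bs ih =>
    intro hne hpw n hn
    have hne' : ∀ γ ∈ bs, γ.Nonempty := fun γ hγ => hne γ (List.mem_cons_of_mem _ hγ)
    rw [List.pairwise_cons] at hpw
    have inner : ∀ β : Finset ℕ, β.Nonempty → (∀ γ ∈ bs, ∀ x ∈ γ, ∀ y ∈ β, x < y) →
        ∀ n, (∀ x ∈ β, x < n) → ∃ F', F' ⊂ G n ∧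
          (∑ i ∈ β, val i) :: bs.map (fun β => ∑ i ∈ β, val i) ∈ R F' := by
      intro β
      induction β using Finset.induction_on_max with
      | empty => intro h; exact absurd h (by simp)
      | insert a s has ihs =>
        intro _ hlt n hn
        refine ⟨G a, hG _ _ (hn a (Finset.mem_insert_self _ _)), ?_⟩
        have ha : a ∉ s := fun h => lt_irrefl _ (has a h)
        rcases s.eq_empty_or_nonempty with rfl | hs
        · simpa using (hR a _ (ih hne' hpw.2 a
            fun γ hγ x hx => hlt γ hγ x hx a (Finset.mem_insert_self _ _))).1
        · have h1 := ihs hs (fun γ hγ x hx y hy => hlt γ hγ x hx y (Finset.mem_insert_of_mem hy))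
            a has
          have h2 := (hR a _ (Or.inr h1)).2
          rw [Finset.sum_insert ha, add_comm]
          exact h2
    right
    exact inner β (hne β (by simp)) hpw.1 n (hn β (by simp))

theorem forward (m : ℕ) (B : Set (Fin m → ℕ)) (p : Ultrafilter ℕ) (hp : IdempotentUF p)
    (hJ : MemJ p) (hB : B ∈ tensor m fun _ => p) :
    ∃ (α : Finset (ℕ → ℕ) → ℕ) (H : Finset (ℕ → ℕ) → Finset ℕ),
      (∀ F : Finset (ℕ → ℕ), F.Nonempty → (H F).Nonempty) ∧
      (∀ F G : Finset (ℕ → ℕ), F.Nonempty → F ⊂ G →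
        ∀ x ∈ H F, ∀ y ∈ H G, x < y) ∧
      (∀ G : ℕ → Finset (ℕ → ℕ),
        (∀ i, (G i).Nonempty) → (∀ i j, i < j → G i ⊂ G j) →
        ∀ f : ℕ → ℕ → ℕ, (∀ i, f i ∈ G i) →
        ∀ β : Fin m → Finset ℕ,
          (∀ l, (β l).Nonempty) →
          (∀ l l' : Fin m, l < l' → ∀ x ∈ β l, ∀ y ∈ β l', x < y) →
          (fun l => ∑ i ∈ β l, (α (G i) + ∑ t ∈ H (G i), f i t)) ∈ B) := by
  classical
  let P : List ℕ → Prop := fun L => ∃ v ∈ B, (List.ofFn v).reverse = L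
  have hg : Good p P m [] := fun _ =>
    iterEv_of_tensor p P m B [] hB fun v hv => ⟨v, hv, by simp⟩
  have h0 : Ok p P m [] := ⟨hg, hg.step⟩
  obtain ⟨α, H, R, h1, h2, h3, h4⟩ := exists_states hp hJ h0
  refine ⟨α, H, fun F _ => h1 F, fun F G _ => h2 F G, ?_⟩
  intro G _ hG f hf β hβ hlt
  let val : ℕ → ℕ := fun i => α (G i) + ∑ t ∈ H (G i), f i t
  have hb := blocks_mem (R := R) hG (val := val) (fun i L hL => h4 (G i) (f i) (hf i) L hL)
    (List.ofFn β).reverse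
    (by
      intro γ hγ
      simp only [List.mem_reverse, List.mem_ofFn] at hγ
      obtain ⟨l, rfl⟩ := hγ
      exact hβ l)
    (by
      rw [List.pairwise_reverse, List.pairwise_ofFn]
      intro i j hij
      exact hlt i j hij)
    ((Finset.univ.biUnion β).sup id + 1)
    (by
      intro γ hγ x hx
      simp only [List.mem_reverse, List.mem_ofFn] at hγ
      obtain ⟨l, rfl⟩ := hγ
      exact Nat.lt_succ_of_le (Finset.le_sup (f := id)
        (Finset.mem_biUnion.2 ⟨l, Finset.mem_univ _, hx⟩)))
  have hlist : (List.ofFn β).reverse.map (fun β => ∑ i ∈ β, val i)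
      = (List.ofFn fun l => ∑ i ∈ β l, val i).reverse := by
    rw [List.map_reverse, List.map_ofFn]; rfl
  rw [hlist] at hb
  have hok : Ok p P m (List.ofFn fun l => ∑ i ∈ β l, val i).reverse := by
    rcases hb with h | ⟨F', -, h⟩
    · rw [h]; exact h0
    · exact h3 _ _ h
  have hP := hok.1 (by simp)
  simp only [List.length_reverse, List.length_ofFn, Nat.sub_self, iterEv] at hP
  obtain ⟨v, hv, hveq⟩ := hP
  have := List.ofFn_injective (List.reverse_injective hveq)
  rw [this] at hv
  exact hv

/-! ### From the combinatorial statement to the ultrafilter -/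

/-- A strictly increasing chain with selected elements. -/
def IsCh (G : ℕ → Finset (ℕ → ℕ)) (f : ℕ → ℕ → ℕ) : Prop :=
  (∀ i j, i < j → G i ⊂ G j) ∧ ∀ i, f i ∈ G i

/-- Sums along chains strictly beyond `F`. -/
def TT (v : Finset (ℕ → ℕ) → (ℕ → ℕ) → ℕ) (F : Finset (ℕ → ℕ)) : Set ℕ :=
  {x | ∃ G f β, IsCh G f ∧ F ⊂ G 0 ∧ β.Nonempty ∧ x = ∑ i ∈ β, v (G i) (f i)}

theorem exists_chain (K : Finset (ℕ → ℕ)) (g : ℕ → ℕ) (hg : g ∈ K) :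
    ∃ G f, IsCh G f ∧ G 0 = K ∧ f 0 = g := by
  classical
  choose nw hnw using fun K : Finset (ℕ → ℕ) => Infinite.exists_notMem_finset K
  let G : ℕ → Finset (ℕ → ℕ) := fun n => Nat.rec K (fun _ L => insert (nw L) L) n
  have hs : ∀ n, G n ⊂ G (n + 1) := fun n => Finset.ssubset_insert (hnw (G n))
  have hmono : StrictMono G := strictMono_nat_of_lt_succ hs
  refine ⟨G, fun _ => g, ⟨fun i j hij => hmono hij, fun i => ?_⟩, rfl, rfl⟩
  exact hmono.monotone (Nat.zero_le i) hg

theorem glue (v : Finset (ℕ → ℕ) → (ℕ → ℕ) → ℕ) {G f} (h : IsCh G f) (N : ℕ) {y : ℕ}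
    (hy : y ∈ TT v (G N)) :
    ∃ G' f' β, IsCh G' f' ∧ (∀ i ≤ N, G' i = G i ∧ f' i = f i) ∧ β.Nonempty ∧ (∀ i ∈ β, N < i) ∧
      y = ∑ i ∈ β, v (G' i) (f' i) := by
  obtain ⟨G₁, f₁, β, h₁, h0, hβ, rfl⟩ := hy
  refine ⟨fun i => if i ≤ N then G i else G₁ (i - (N + 1)),
    fun i => if i ≤ N then f i else f₁ (i - (N + 1)),
    β.map (addRightEmbedding (N + 1)), ⟨?_, ?_⟩, ?_, hβ.map, ?_, ?_⟩
  · have hmono : StrictMono G := fun i j hij => h.1 i j hij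
    have hmono₁ : StrictMono G₁ := fun i j hij => h₁.1 i j hij
    intro i j hij
    by_cases hj : j ≤ N
    · simp only [hj, hij.le.trans hj, if_true]; exact h.1 _ _ hij
    · by_cases hi : i ≤ N
      · simp only [hi, hj, if_true, if_false]
        exact ((hmono.monotone hi).trans_lt h0).trans_le (hmono₁.monotone (Nat.zero_le _))
      · simp only [hi, hj, if_false]
        exact h₁.1 _ _ (by omega)
  · intro i
    by_cases hi : i ≤ N
    · simp only [hi, if_true]; exact h.2 i
    · simp only [hi, if_false]; exact h₁.2 _
  · intro i hi
    simp [hi]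
  · intro i hi
    simp only [Finset.mem_map, addRightEmbedding_apply] at hi
    obtain ⟨s, -, rfl⟩ := hi
    omega
  · rw [Finset.sum_map]
    refine Finset.sum_congr rfl fun i _ => ?_
    have : ¬ (i + (N + 1) ≤ N) := by omega
    simp [this]

theorem tensor_mem (v : Finset (ℕ → ℕ) → (ℕ → ℕ) → ℕ) (p : Ultrafilter ℕ)
    (hp : ∀ F, TT v F ∈ p) :
    ∀ (k : ℕ) (G : ℕ → Finset (ℕ → ℕ)) (f : ℕ → ℕ → ℕ) (N : ℕ) (S : Set (Fin k → ℕ)),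
      IsCh G f →
      (∀ G' f', IsCh G' f' → (∀ i ≤ N, G' i = G i ∧ f' i = f i) →
        ∀ β : Fin k → Finset ℕ, (∀ l, (β l).Nonempty) →
          (∀ l l' : Fin k, l < l' → ∀ x ∈ β l, ∀ y ∈ β l', x < y) →
          (∀ l, ∀ x ∈ β l, N < x) →
          (fun l => ∑ i ∈ β l, v (G' i) (f' i)) ∈ S) →
      S ∈ tensor k fun _ => p := by
  intro k
  induction k with
  | zero =>
    intro G f N S hGf hS
    have h1 := hS G f hGf (fun i _ => ⟨rfl, rfl⟩) (fun l => l.elim0) (fun l => l.elim0)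
      (fun l => l.elim0) (fun l => l.elim0)
    show (fun i : Fin 0 => (i.elim0 : ℕ)) ∈ S
    convert h1 using 1
  | succ k ih =>
    intro G f N S hGf hS
    show ∀ᶠ x in (p : Filter ℕ), {w : Fin k → ℕ | (Fin.cons x w : Fin (k + 1) → ℕ) ∈ S}
        ∈ tensor k (fun _ => p)
    refine Filter.Eventually.mono (hp (G N)) fun x hx => ?_
    obtain ⟨G', f', β₀, hG', hag, hβ₀, hN, rfl⟩ := glue v hGf N hx
    have hle : ∀ i ∈ β₀, i ≤ β₀.sup id := fun i hi => Finset.le_sup (f := id) hi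
    refine ih G' f' (β₀.sup id) _ hG' ?_
    intro G'' f'' hG'' hag' β hβ hlt hbd
    have hNs : N < β₀.sup id := by
      obtain ⟨i, hi⟩ := hβ₀
      exact (hN i hi).trans_le (hle i hi)
    have h1 := hS G'' f'' hG'' (fun i hi => by
        obtain ⟨h1, h2⟩ := hag' i (hi.trans hNs.le)
        obtain ⟨h3, h4⟩ := hag i hi
        exact ⟨h1.trans h3, h2.trans h4⟩) (Fin.cons β₀ β)
      (by
        intro l
        refine Fin.cases ?_ (fun l => ?_) l
        · simpa using hβ₀
        · simpa using hβ l)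
      (by
        intro l l'
        refine Fin.cases ?_ (fun l => ?_) l
        · refine Fin.cases ?_ (fun l' => ?_) l'
          · intro h; exact absurd h (lt_irrefl _)
          · intro _ x hx y hy
            simp only [Fin.cons_zero, Fin.cons_succ] at hx hy
            exact (hle x hx).trans_lt (hbd l' y hy)
        · refine Fin.cases ?_ (fun l' => ?_) l'
          · intro h; exact absurd h (Fin.not_lt_zero _)
          · intro h x hx y hy
            simp only [Fin.cons_succ] at hx hy
            exact hlt l l' (Fin.succ_lt_succ_iff.1 h) x hx y hy)
      (by
        intro l
        refine Fin.cases ?_ (fun l => ?_) l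
        · simpa using hN
        · intro x hx
          simp only [Fin.cons_succ] at hx
          exact hNs.trans (hbd l x hx))
    show (Fin.cons _ _ : Fin (k + 1) → ℕ) ∈ S
    convert h1 using 1
    funext l
    refine Fin.cases ?_ (fun l => ?_) l
    · simp only [Fin.cons_zero]
      refine Finset.sum_congr rfl fun i hi => ?_
      obtain ⟨h1, h2⟩ := hag' i (hle i hi)
      rw [h1, h2]
    · simp only [Fin.cons_succ]

theorem TT_anti (v : Finset (ℕ → ℕ) → (ℕ → ℕ) → ℕ) {F F' : Finset (ℕ → ℕ)} (h : F ⊆ F') :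
    TT v F' ⊆ TT v F := by
  rintro x ⟨G, f, β, h1, h2, h3⟩
  exact ⟨G, f, β, h1, lt_of_le_of_lt h h2, h3⟩

theorem TT_isJSet (α : Finset (ℕ → ℕ) → ℕ) (H : Finset (ℕ → ℕ) → Finset ℕ)
    (hH : ∀ F : Finset (ℕ → ℕ), F.Nonempty → (H F).Nonempty) (F : Finset (ℕ → ℕ)) :
    IsJSet (TT (fun F f => α F + ∑ t ∈ H F, f t) F) := by
  classical
  intro F' hF'
  obtain ⟨g, hg⟩ := Infinite.exists_notMem_finset (F ∪ F')
  refine ⟨α (insert g (F ∪ F')), H (insert g (F ∪ F')), hH _ (Finset.insert_nonempty _ _),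
    fun f hf => ?_⟩
  obtain ⟨G, φ, h1, h2, h3⟩ := exists_chain (insert g (F ∪ F')) f
    (Finset.mem_insert_of_mem (Finset.mem_union_right _ hf))
  refine ⟨G, φ, {0}, h1, ?_, by simp, by simp [h2, h3]⟩
  rw [h2]
  exact lt_of_le_of_lt (Finset.subset_union_left (s₂ := F')) (Finset.ssubset_insert hg)

/-- There is an ultrafilter in `𝒥` containing a directed family of J-sets. -/
theorem exists_memJ (T : Finset (ℕ → ℕ) → Set ℕ) (hanti : ∀ F F', F ⊆ F' → T F' ⊆ T F)
    (hT : ∀ F, IsJSet (T F)) : ∃ p : Ultrafilter ℕ, MemJ p ∧ ∀ F, T F ∈ p := by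
  classical
  have hempty : ¬ IsJSet (∅ : Set ℕ) := by
    intro h
    obtain ⟨a, β, -, h'⟩ := h {0} (by simp)
    exact h' 0 (by simp)
  let 𝓕 : Filter ℕ :=
    { sets := {A | ∃ F, ¬ IsJSet (T F \ A)}
      univ_sets := ⟨∅, by simpa using hempty⟩
      sets_of_superset := by
        rintro A B ⟨F, hF⟩ hAB
        exact ⟨F, fun h => hF (h.mono (Set.sdiff_subset_sdiff_right hAB))⟩
      inter_sets := by
        rintro A B ⟨F, hF⟩ ⟨F', hF'⟩
        refine ⟨F ∪ F', fun h => ?_⟩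
        rw [Set.sdiff_inter] at h
        rcases h.union with h | h
        · exact hF (h.mono (Set.sdiff_subset_sdiff_left (hanti _ _ Finset.subset_union_left)))
        · exact hF' (h.mono (Set.sdiff_subset_sdiff_left (hanti _ _ Finset.subset_union_right))) }
  have : 𝓕.NeBot := by
    refine ⟨fun h => ?_⟩
    have : (∅ : Set ℕ) ∈ 𝓕 := by rw [h]; exact Filter.mem_bot
    obtain ⟨F, hF⟩ := this
    exact hF (by simpa using hT F)
  refine ⟨Ultrafilter.of 𝓕, ?_, ?_⟩
  · intro A hA
    by_contra hnJ
    have h1 : Aᶜ ∈ 𝓕 := ⟨∅, fun h => hnJ (h.mono (by intro x hx; simpa using hx.2))⟩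
    have h2 : Aᶜ ∈ Ultrafilter.of 𝓕 := Ultrafilter.of_le 𝓕 h1
    exact (Ultrafilter.compl_mem_iff_notMem.1 h2) hA
  · intro F
    exact Ultrafilter.of_le 𝓕 ⟨F, by simpa using hempty⟩

attribute [local instance] Ultrafilter.addSemigroup Ultrafilter.add

theorem backward (m : ℕ) (B : Set (Fin m → ℕ)) (α : Finset (ℕ → ℕ) → ℕ)
    (H : Finset (ℕ → ℕ) → Finset ℕ)
    (hH : ∀ F : Finset (ℕ → ℕ), F.Nonempty → (H F).Nonempty)
    (hB : ∀ G : ℕ → Finset (ℕ → ℕ),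
        (∀ i, (G i).Nonempty) → (∀ i j, i < j → G i ⊂ G j) →
        ∀ f : ℕ → ℕ → ℕ, (∀ i, f i ∈ G i) →
        ∀ β : Fin m → Finset ℕ,
          (∀ l, (β l).Nonempty) →
          (∀ l l' : Fin m, l < l' → ∀ x ∈ β l, ∀ y ∈ β l', x < y) →
          (fun l => ∑ i ∈ β l, (α (G i) + ∑ t ∈ H (G i), f i t)) ∈ B) :
    ∃ p : Ultrafilter ℕ, IdempotentUF p ∧ MemJ p ∧ B ∈ tensor m fun _ => p := by
  classical
  let v : Finset (ℕ → ℕ) → (ℕ → ℕ) → ℕ := fun F f => α F + ∑ t ∈ H F, f t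
  let Q : Set (Ultrafilter ℕ) := {p | MemJ p ∧ ∀ F, TT v F ∈ p}
  have hQne : Q.Nonempty := exists_memJ (TT v) (fun F F' h => TT_anti v h) (TT_isJSet α H hH)
  have hQcl : IsClosed Q := by
    have h1 : Q = (⋂ A ∈ {A : Set ℕ | ¬ IsJSet A}, {p : Ultrafilter ℕ | A ∈ p}ᶜ) ∩
        ⋂ F, {p : Ultrafilter ℕ | TT v F ∈ p} := by
      ext p
      simp only [Q, MemJ, Set.mem_inter_iff, Set.mem_iInter, Set.mem_ofPred_eq, Set.mem_compl_iff]
      refine and_congr_left fun _ => forall_congr' fun A => ?_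
      tauto
    rw [h1]
    refine IsClosed.inter (isClosed_biInter fun A _ => ?_) (isClosed_iInter fun F => ?_)
    · exact (ultrafilter_isOpen_basic A).isClosed_compl
    · exact ultrafilter_isClosed_basic _
  have hQadd : ∀ p ∈ Q, ∀ q ∈ Q, p + q ∈ Q := by
    rintro p ⟨hp, hpT⟩ q ⟨hq, hqT⟩
    refine ⟨?_, ?_⟩
    · intro A hA
      have h1 : ∀ᶠ x in (p : Filter ℕ), ∀ᶠ y in (q : Filter ℕ), x + y ∈ A :=
        (Ultrafilter.eventually_add p q (· ∈ A)).1 hA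
      obtain ⟨x, hx⟩ := h1.exists
      intro F hF
      obtain ⟨a, β, hβ, h2⟩ := hq _ hx F hF
      exact ⟨x + a, β, hβ, fun f hf => by rw [add_assoc]; exact h2 f hf⟩
    · intro F
      refine (Ultrafilter.eventually_add p q (· ∈ TT v F)).2 ?_
      refine Filter.Eventually.mono (hpT F) fun x hx => ?_
      obtain ⟨G, f, β, hGf, hF, hβ, rfl⟩ := hx
      refine Filter.Eventually.mono (hqT (G (β.sup id))) fun y hy => ?_
      obtain ⟨G', f', β', hG', hag, hβ', hN, rfl⟩ := glue v hGf _ hy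
      have hle : ∀ i ∈ β, i ≤ β.sup id := fun i hi => Finset.le_sup (f := id) hi
      refine ⟨G', f', β ∪ β', hG', ?_, hβ.mono Finset.subset_union_left, ?_⟩
      · rw [(hag 0 (Nat.zero_le _)).1]; exact hF
      · rw [Finset.sum_union]
        · congr 1
          refine Finset.sum_congr rfl fun i hi => ?_
          rw [(hag i (hle i hi)).1, (hag i (hle i hi)).2]
        · rw [Finset.disjoint_left]
          intro i hi hi'
          exact absurd (hle i hi) (not_le.2 (hN i hi'))
  obtain ⟨p, hpQ, hpp⟩ := exists_idempotent_in_compact_add_subsemigroup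
    (M := Ultrafilter ℕ) Ultrafilter.continuous_add_left Q hQne hQcl.isCompact hQadd
  refine ⟨p, ?_, hpQ.1, ?_⟩
  · have : uAdd p p = p + p := by
      refine Ultrafilter.ext fun S => ?_
      exact (Ultrafilter.eventually_add p p (· ∈ S)).symm
    exact this.trans hpp
  · obtain ⟨G, f, hGf, -, -⟩ := exists_chain {0} 0 (by simp)
    refine tensor_mem v p hpQ.2 m G f 0 B hGf ?_
    intro G' f' hG' _ β hβ hlt _
    exact hB G' (fun i => ⟨_, hG'.2 i⟩) hG'.1 f' hG'.2 β hβ hlt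

/-- Polynomial Milliken–Taylor / stronger central sets theorem, single idempotent,
composed with a polynomial `h : ℕ^m → ℕ` with no constant term. -/
theorem polynomial_image_stronger_CST_I (m : ℕ) (hm : 1 ≤ m)
    (h : (Fin m → ℕ) → ℕ)
    (hh : ∃ Q : MvPolynomial (Fin m) ℕ,
      MvPolynomial.coeff 0 Q = 0 ∧ ∀ v, h v = MvPolynomial.eval v Q)
    (A : Set ℕ) :
    (∃ (α : Finset (ℕ → ℕ) → ℕ) (H : Finset (ℕ → ℕ) → Finset ℕ),
      (∀ F : Finset (ℕ → ℕ), F.Nonempty → (H F).Nonempty) ∧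
      (∀ F G : Finset (ℕ → ℕ), F.Nonempty → F ⊂ G →
        ∀ x ∈ H F, ∀ y ∈ H G, x < y) ∧
      (∀ G : ℕ → Finset (ℕ → ℕ),
        (∀ i, (G i).Nonempty) → (∀ i j, i < j → G i ⊂ G j) →
        ∀ f : ℕ → ℕ → ℕ, (∀ i, f i ∈ G i) →
        ∀ β : Fin m → Finset ℕ,
          (∀ l, (β l).Nonempty) →
          (∀ l l' : Fin m, l < l' → ∀ x ∈ β l, ∀ y ∈ β l', x < y) →
          h (fun l => ∑ i ∈ β l, (α (G i) + ∑ t ∈ H (G i), f i t)) ∈ A))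
    ↔
    (∃ p : Ultrafilter ℕ, IdempotentUF p ∧ MemJ p ∧
      A ∈ (tensor m fun _ => p).map h) := by
  constructor
  · rintro ⟨α, H, h1, -, h3⟩
    exact backward m (h ⁻¹' A) α H h1 h3
  · rintro ⟨p, hp, hJ, hA⟩
    exact forward m (h ⁻¹' A) p hp hJ hA

end MultiCST
end
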